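/- Let Ω ⊆ ℝ³ be open and α > −1, and assume (QPD). There exists a constant c > 0, depending only on α and c₀, such that: if ρ > 0 and u ∈ H̊¹(Ω;ℝ³) satisfies Lu = 0 on Ω∩B_{2ρ}, then for every y ∈ Ω∩B_ρ, |u(y)|² + ∫_{Ω∩B_ρ} |Du(x)|² |x−y|^{−1} dx ≤ c · m_ρ(u). -/

import Mathlib

/-!
By scaling it suffices to treat `ρ = 1`. Let `η` be a cutoff equal to `1` on `B_{3/2}` and supported
in `B_2`, and apply the weighted positivity to `ηu` with pole `y ∈ B_1`. Since `Lu = 0`, the energy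
`∫ L(ηu)·(Φ(· - y) ηu)` only sees the commutator of `L` with `η`: it is quadratic in `(u, Du)`,
carries a derivative of `η` in every term, and so lives on the part of the annulus `S_1` where `Φ`
and its gradient are bounded. A Caccioppoli inequality on a slightly larger part of `S_1` absorbs
`Du` into `∫_{S_1} |u|²`.

Since `u` vanishes on `∂Ω` only in the `H¹` sense, `ηu` need not be a test field. So the argument is
run on approximating test fields that agree with `u` near `y`: there the energy density vanishes
identically and the singularity of `Φ` can be cut out, while everywhere else all weights are bounded
and the approximation errors tend to zero.
-/

open MeasureTheory Metric Real Filter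

noncomputable section

/-- `ℝ³` as Euclidean space. -/
abbrev E3 : Type := EuclideanSpace ℝ (Fin 3)

/-- Partial derivative `∂ᵢ f` on `ℝ³`. -/
def pd (i : Fin 3) (f : E3 → ℝ) (x : E3) : ℝ :=
  fderiv ℝ f x (EuclideanSpace.single i 1)

/-- Laplacian on `ℝ³`. -/
def lap (f : E3 → ℝ) (x : E3) : ℝ := ∑ i, pd i (pd i f) x

/-- Divergence of a vector field on `ℝ³`. -/
def divg (u : E3 → Fin 3 → ℝ) (x : E3) : ℝ := ∑ k, pd k (fun y => u y k) x

/-- The 3D Lamé operator `(Lu)ᵢ = -Δuᵢ - α ∂ᵢ (div u)`. -/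
def lame (α : ℝ) (u : E3 → Fin 3 → ℝ) (x : E3) (i : Fin 3) : ℝ :=
  - lap (fun y => u y i) x - α * pd i (divg u) x

/-- The constant `c_α = (α+2)/(8π(α+1))`. -/
def cA (α : ℝ) : ℝ := (α + 2) / (8 * Real.pi * (α + 1))

/-- The fundamental matrix `Φ` of the 3D Lamé system:
`Φ_ij(x) = c_α |x|⁻¹ (δ_ij + (α/(α+2)) xᵢxⱼ/|x|²)`. -/
def Phi (α : ℝ) (x : E3) (i j : Fin 3) : ℝ :=
  cA α * ‖x‖⁻¹ * ((if i = j then (1 : ℝ) else 0) + (α / (α + 2)) * (x i * x j) / ‖x‖ ^ 2)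

/-- `u ∈ C₀^∞(U; ℝ³)`: smooth, compactly supported, with support inside `U`. -/
def IsTestOn (U : Set E3) (u : E3 → Fin 3 → ℝ) : Prop :=
  ContDiff ℝ (⊤ : ℕ∞) u ∧ HasCompactSupport u ∧ tsupport u ⊆ U

/-- `∫_{ℝ³} (Lu)·(Φ(·-y) u) dx`. -/
def lameEnergy (α : ℝ) (u : E3 → Fin 3 → ℝ) (y : E3) : ℝ :=
  ∫ x : E3, ∑ i, ∑ j, lame α u x i * Phi α (x - y) i j * u x j

/-- (QPD): quantitative weighted positive definiteness of the Lamé system with weight `Φ`,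
with constant `c₀`. -/
def QPDhyp (α c₀ : ℝ) : Prop :=
  ∀ u : E3 → Fin 3 → ℝ, IsTestOn Set.univ u → ∀ y : E3,
    (1 / 2) * (∑ i, (u y i) ^ 2) +
      c₀ * ∫ x : E3, (∑ i, ∑ k, (pd k (fun z => u z i) x) ^ 2) * ‖x - y‖⁻¹ ≤
    lameEnergy α u y

/-- `u ∈ H̊¹(Ω; ℝ³)`: `u` is smooth on `Ω`, `∫_Ω (|u|² + |Du|²) < ∞`, and `u` is
approximated in this norm by test fields supported in `Ω`. -/
def MemH10 (Ω : Set E3) (u : E3 → Fin 3 → ℝ) : Prop :=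
  ContDiffOn ℝ (⊤ : ℕ∞) u Ω ∧
  IntegrableOn (fun x => (∑ i, (u x i) ^ 2) +
    ∑ i, ∑ k, (pd k (fun z => u z i) x) ^ 2) Ω volume ∧
  ∃ un : ℕ → E3 → Fin 3 → ℝ, (∀ n, IsTestOn Ω (un n)) ∧
    Tendsto (fun n => ∫ x in Ω, ((∑ i, (u x i - un n x i) ^ 2) +
      ∑ i, ∑ k, (pd k (fun z => u z i - un n z i) x) ^ 2)) atTop (nhds 0)

/-- `m_ρ(u) = ρ⁻³ ∫_{Ω ∩ S_ρ} |u|² dx`, where `S_ρ = {ρ < |x| < 2ρ}`. -/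
def mRho (Ω : Set E3) (ρ : ℝ) (u : E3 → Fin 3 → ℝ) : ℝ :=
  (ρ ^ 3)⁻¹ * ∫ x in Ω ∩ {x : E3 | ρ < ‖x‖ ∧ ‖x‖ < 2 * ρ}, ∑ i, (u x i) ^ 2

/-- `M_ρ(u) = ρ⁻³ ∫_{Ω ∩ B_ρ} |u|² dx`. -/
def MRho (Ω : Set E3) (ρ : ℝ) (u : E3 → Fin 3 → ℝ) : ℝ :=
  (ρ ^ 3)⁻¹ * ∫ x in Ω ∩ ball (0 : E3) ρ, ∑ i, (u x i) ^ 2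

open scoped ContDiff Topology

set_option maxSynthPendingDepth 3

/-! ### Test functions -/

section TestFunctions

variable {E F G : Type*} [NormedAddCommGroup E] [NormedSpace ℝ E]
  [NormedAddCommGroup F] [NormedSpace ℝ F] [NormedAddCommGroup G] [NormedSpace ℝ G]

/-- `f ∈ C₀^∞(U; F)`: smooth, compactly supported, with support inside `U`. `IsTestOn` is the
case `E = F = ℝ³`. -/
def IsTestFun (U : Set E) (f : E → F) : Prop :=
  ContDiff ℝ ∞ f ∧ HasCompactSupport f ∧ tsupport f ⊆ U

namespace IsTestFun

variable {U V : Set E} {f g : E → F}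

theorem of_support_subset {g : E → G} (hf : IsTestFun U f)
    (hg : ∀ x ∈ tsupport f, ContDiffAt ℝ ∞ g x) (hs : Function.support g ⊆ tsupport f) :
    IsTestFun U g := by
  have hts : tsupport g ⊆ tsupport f := closure_minimal hs (isClosed_tsupport f)
  refine ⟨contDiff_iff_contDiffAt.2 fun x => ?_, hf.2.1.mono' hs, hts.trans hf.2.2⟩
  by_cases hx : x ∈ tsupport f
  · exact hg x hx
  · exact contDiffAt_const.congr_of_eventuallyEq
      (notMem_tsupport_iff_eventuallyEq.1 fun h => hx (hts h))

theorem differentiable (hf : IsTestFun U f) : Differentiable ℝ f :=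
  hf.1.differentiable (by simp)

theorem mono (hf : IsTestFun U f) (hUV : U ⊆ V) : IsTestFun V f :=
  ⟨hf.1, hf.2.1, hf.2.2.trans hUV⟩

theorem inter (hU : IsTestFun U f) (hV : IsTestFun V f) : IsTestFun (U ∩ V) f :=
  ⟨hU.1, hU.2.1, Set.subset_inter hU.2.2 hV.2.2⟩

theorem notMem_tsupport (hf : IsTestFun U f) {x : E} (hx : x ∉ U) : x ∉ tsupport f :=
  fun h => hx (hf.2.2 h)

theorem eq_zero (hf : IsTestFun U f) {x : E} (hx : x ∉ U) : f x = 0 :=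
  image_eq_zero_of_notMem_tsupport (hf.notMem_tsupport hx)

theorem fderiv_eq_zero (hf : IsTestFun U f) {x : E} (hx : x ∉ U) : fderiv ℝ f x = 0 :=
  fderiv_of_notMem_tsupport ℝ (hf.notMem_tsupport hx)

protected theorem fderiv (hf : IsTestFun U f) : IsTestFun U (fderiv ℝ f) :=
  hf.of_support_subset (fun _ _ => (hf.1.fderiv_right le_rfl).contDiffAt)
    (support_fderiv_subset ℝ)

theorem clm_apply (hf : IsTestFun U f) {M : E → F →L[ℝ] G}
    (hM : ∀ x ∈ tsupport f, ContDiffAt ℝ ∞ M x) : IsTestFun U fun x => M x (f x) :=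
  hf.of_support_subset (fun x hx => (hM x hx).clm_apply hf.1.contDiffAt) fun x hx =>
    subset_tsupport f fun h => hx (by simp [h])

theorem clm_comp (hf : IsTestFun U f) (L : F →L[ℝ] G) : IsTestFun U fun x => L (f x) :=
  hf.clm_apply fun _ _ => contDiffAt_const

theorem fderiv_apply (hf : IsTestFun U f) (v : E) : IsTestFun U fun x => fderiv ℝ f x v :=
  hf.fderiv.clm_comp (ContinuousLinearMap.apply ℝ F v)

theorem apply_left {M : E → F →L[ℝ] G} (hM : IsTestFun U M)
    (hf : ∀ x ∈ tsupport M, ContDiffAt ℝ ∞ f x) : IsTestFun U fun x => M x (f x) :=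
  hM.of_support_subset (fun x hx => hM.1.contDiffAt.clm_apply (hf x hx)) fun x hx =>
    subset_tsupport M fun h => hx (by simp [h])

theorem smul_left {φ : E → ℝ} (hφ : IsTestFun U φ)
    (hf : ∀ x ∈ tsupport φ, ContDiffAt ℝ ∞ f x) : IsTestFun U fun x => φ x • f x :=
  hφ.of_support_subset (fun x hx => hφ.1.contDiffAt.smul (hf x hx)) fun x hx =>
    subset_tsupport φ fun h => hx (by simp [h])

theorem smul_right {φ : E → ℝ} (hφ : ContDiff ℝ ∞ φ) (hf : IsTestFun U f) :
    IsTestFun U fun x => φ x • f x :=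
  hf.of_support_subset (fun _ _ => hφ.contDiffAt.smul hf.1.contDiffAt) fun x hx =>
    subset_tsupport f fun h => hx (by simp [h])

theorem add (hf : IsTestFun U f) (hg : IsTestFun U g) : IsTestFun U fun x => f x + g x :=
  ⟨hf.1.add hg.1, hf.2.1.add hg.2.1,
    (tsupport_add f g).trans (Set.union_subset hf.2.2 hg.2.2)⟩

theorem comp_smul {c : ℝ} (hc : c ≠ 0) (hf : IsTestFun U f) :
    IsTestFun ((c • · : E → E) ⁻¹' U) fun x => f (c • x) :=
  ⟨hf.1.comp (contDiff_const_smul c), hf.2.1.comp_smul hc,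
    (tsupport_comp_subset_preimage f (continuous_const_smul c)).trans
      (Set.preimage_mono hf.2.2)⟩

theorem exists_bound (hf : IsTestFun U f) :
    ∃ m, 0 ≤ m ∧ ∀ x, ‖f x‖ ≤ m ∧ ‖fderiv ℝ f x‖ ≤ m := by
  obtain ⟨a, ha⟩ := hf.2.1.exists_bound_of_continuous hf.1.continuous
  obtain ⟨b, hb⟩ := hf.fderiv.2.1.exists_bound_of_continuous hf.fderiv.1.continuous
  exact ⟨max a b, ((norm_nonneg _).trans (ha 0)).trans (le_max_left a b),
    fun x => ⟨(ha x).trans (le_max_left a b), (hb x).trans (le_max_right a b)⟩⟩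

end IsTestFun

theorem exists_isTestFun_eq_one [FiniteDimensional ℝ E] {K U : Set E} (hK : IsCompact K)
    (hU : IsOpen U) (hKU : K ⊆ U) :
    ∃ χ : E → ℝ, IsTestFun U χ ∧ ∀ᶠ x in 𝓝ˢ K, χ x = 1 := by
  have := FiniteDimensional.proper ℝ E
  obtain ⟨L, hL, hKL, hLU⟩ := exists_compact_between hK hU hKU
  obtain ⟨χ, hχK, hχL, -⟩ := exists_contMDiffMap_one_nhds_of_subset_interior (n := ⊤)
    (modelWithCornersSelf ℝ E) hK.isClosed hKL
  have hts : tsupport χ ⊆ L :=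
    closure_minimal (Function.support_subset_iff'.2 hχL) hL.isClosed
  exact ⟨χ, ⟨χ.contMDiff.contDiff, hL.of_isClosed_subset (isClosed_tsupport _) hts,
    hts.trans hLU⟩, hχK⟩

section Integrability

variable [MeasurableSpace E] [BorelSpace E] {μ : Measure E}

theorem IsTestFun.integrable_comp_mul {U : Set E} {f : E → F} {k : E → ℝ} {φ : F → ℝ}
    (hf : IsTestFun U f) (hφ : Continuous φ) (hφ0 : φ 0 = 0) (hk : LocallyIntegrable k μ) :
    Integrable (fun x => φ (f x) * k x) μ :=
  hk.integrable_smul_left_of_hasCompactSupport (hφ.comp hf.1.continuous)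
    (hf.2.1.comp_left (g := φ) hφ0)

theorem IsTestFun.integrable_comp [IsFiniteMeasureOnCompacts μ] {U : Set E} {f : E → F} {φ : F → ℝ}
    (hf : IsTestFun U f) (hφ : Continuous φ) (hφ0 : φ 0 = 0) :
    Integrable (fun x => φ (f x)) μ :=
  (hφ.comp hf.1.continuous).integrable_of_hasCompactSupport (hf.2.1.comp_left (g := φ) hφ0)

theorem IsTestFun.integrable [IsFiniteMeasureOnCompacts μ] {U : Set E} {f : E → F}
    (hf : IsTestFun U f) : Integrable f μ :=
  hf.1.continuous.integrable_of_hasCompactSupport hf.2.1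

theorem locallyIntegrable_norm_sub_inv [FiniteDimensional ℝ E] [μ.IsAddHaarMeasure]
    (hE : 2 ≤ Module.finrank ℝ E) (y : E) : LocallyIntegrable (fun x => ‖x - y‖⁻¹) μ := by
  have : Nontrivial E := Module.nontrivial_of_finrank_pos (R := ℝ) (by lia)
  have hball (R : ℝ) : IntegrableOn (fun x : E => ‖x‖⁻¹) (ball 0 R) μ := by
    rw [integrableOn_fun_norm_addHaar μ (f := fun s : ℝ => s⁻¹)]
    refine ((continuous_pow (Module.finrank ℝ E - 2)).integrableOn_Icc (a := 0)
      (b := R)).mono_set Set.Ioo_subset_Icc_self |>.congr_fun (fun s hs => ?_) measurableSet_Ioo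
    obtain ⟨d, hd⟩ := Nat.exists_eq_add_of_le hE
    have : s ≠ 0 := hs.1.ne'
    simp only [hd, smul_eq_mul, Nat.add_sub_cancel_left, show 2 + d - 1 = d + 1 by lia]
    field_simp
    ring
  intro x
  refine ⟨ball y (dist x y + 1), isOpen_ball.mem_nhds (by simp), ?_⟩
  have := (measurePreserving_sub_right μ y).integrableOn_comp_preimage
    (MeasurableEquiv.subRight y).measurableEmbedding (f := fun x : E => ‖x‖⁻¹)
    (s := ball 0 (dist x y + 1))
  rw [show (fun z => z - y) ⁻¹' ball 0 (dist x y + 1) = ball y (dist x y + 1) by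
    ext; simp [dist_eq_norm]] at this
  exact this.2 (hball _)

end Integrability

end TestFunctions

/-! ### Approximation by test functions in `H¹` -/

section H1

variable {E F G : Type*} [NormedAddCommGroup E] [NormedSpace ℝ E]
  [NormedAddCommGroup F] [NormedSpace ℝ F] [NormedAddCommGroup G] [NormedSpace ℝ G]

/-- The density `|f|² + |Df|²` of the squared `H¹` norm. -/
def h1Density (f : E → F) (x : E) : ℝ := ‖f x‖ ^ 2 + ‖fderiv ℝ f x‖ ^ 2

section Pointwise

variable {f g : E → F} {x : E}

theorem h1Density_nonneg (f : E → F) (x : E) : 0 ≤ h1Density f x := by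
  unfold h1Density; positivity

theorem norm_sq_le_h1Density (f : E → F) (x : E) : ‖f x‖ ^ 2 ≤ h1Density f x :=
  le_add_of_nonneg_right (sq_nonneg _)

theorem norm_fderiv_sq_le_h1Density (f : E → F) (x : E) : ‖fderiv ℝ f x‖ ^ 2 ≤ h1Density f x :=
  le_add_of_nonneg_left (sq_nonneg _)

theorem h1Density_congr (h : f =ᶠ[𝓝 x] g) : h1Density f x = h1Density g x := by
  rw [h1Density, h1Density, h.eq_of_nhds, h.fderiv_eq]

theorem norm_sq_le_two_mul_add {V : Type*} [SeminormedAddCommGroup V] (a b : V) :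
    ‖a‖ ^ 2 ≤ 2 * (‖b‖ ^ 2 + ‖a - b‖ ^ 2) := by
  have h : ‖a‖ ≤ ‖b‖ + ‖a - b‖ := by simpa using norm_add_le b (a - b)
  nlinarith [norm_nonneg a, sq_nonneg (‖b‖ - ‖a - b‖)]

theorem h1Density_le_two_mul_add (hf : DifferentiableAt ℝ f x) (hg : DifferentiableAt ℝ g x) :
    h1Density f x ≤ 2 * (h1Density g x + h1Density (g - f) x) := by
  have h₀ := norm_sq_le_two_mul_add (f x) (g x)
  have h₁ := norm_sq_le_two_mul_add (fderiv ℝ f x) (fderiv ℝ g x)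
  rw [norm_sub_rev] at h₀ h₁
  simp only [h1Density, fderiv_sub hg hf, Pi.sub_apply]
  linarith

theorem h1Density_sub_le_two_mul_add (hf : DifferentiableAt ℝ f x)
    (hg : DifferentiableAt ℝ g x) :
    h1Density (f - g) x ≤ 2 * (h1Density f x + h1Density g x) := by
  simpa [h1Density] using h1Density_le_two_mul_add (hf.sub hg) hf

theorem h1Density_le_of_norm_le {g : E → G} {m : ℝ} (h₀ : ‖g x‖ ≤ m * ‖f x‖)
    (h₁ : ‖fderiv ℝ g x‖ ≤ m * (‖f x‖ + ‖fderiv ℝ f x‖)) :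
    h1Density g x ≤ 3 * m ^ 2 * h1Density f x := by
  have h₀' := pow_le_pow_left₀ (norm_nonneg _) h₀ 2
  have h₁' := pow_le_pow_left₀ (norm_nonneg _) h₁ 2
  unfold h1Density
  nlinarith [mul_nonneg (sq_nonneg m) (sq_nonneg (‖f x‖ - ‖fderiv ℝ f x‖)), sq_nonneg (m * ‖f x‖),
    sq_nonneg (m * ‖fderiv ℝ f x‖)]

theorem h1Density_clm_apply_le {M : E → F →L[ℝ] G} {m : ℝ} (hM : DifferentiableAt ℝ M x)
    (hf : DifferentiableAt ℝ f x) (h₀ : ‖M x‖ ≤ m) (h₁ : ‖fderiv ℝ M x‖ ≤ m) :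
    h1Density (fun z => M z (f z)) x ≤ 3 * m ^ 2 * h1Density f x := by
  refine h1Density_le_of_norm_le ((M x).le_of_opNorm_le h₀ _) ?_
  rw [fderiv_clm_apply hM hf]
  calc ‖M x ∘L fderiv ℝ f x + (fderiv ℝ M x).flip (f x)‖
      ≤ ‖M x ∘L fderiv ℝ f x‖ + ‖(fderiv ℝ M x).flip (f x)‖ := norm_add_le _ _
    _ ≤ m * ‖fderiv ℝ f x‖ + m * ‖f x‖ := by
        refine add_le_add ((ContinuousLinearMap.opNorm_comp_le _ _).trans (by gcongr))
          (ContinuousLinearMap.le_of_opNorm_le _ ?_ _)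
        rwa [ContinuousLinearMap.opNorm_flip]
    _ = m * (‖f x‖ + ‖fderiv ℝ f x‖) := by ring

theorem h1Density_smul_le {φ : E → ℝ} {m : ℝ} (hφ : DifferentiableAt ℝ φ x)
    (hf : DifferentiableAt ℝ f x) (h₀ : ‖φ x‖ ≤ m) (h₁ : ‖fderiv ℝ φ x‖ ≤ m) :
    h1Density (fun z => φ z • f z) x ≤ 3 * m ^ 2 * h1Density f x := by
  refine h1Density_le_of_norm_le (by rw [norm_smul]; gcongr) ?_
  rw [fderiv_fun_smul hφ hf]
  calc ‖φ x • fderiv ℝ f x + (fderiv ℝ φ x).smulRight (f x)‖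
      ≤ ‖φ x‖ * ‖fderiv ℝ f x‖ + ‖fderiv ℝ φ x‖ * ‖f x‖ := by
        rw [← norm_smul, ← ContinuousLinearMap.norm_smulRight_apply]
        exact norm_add_le _ _
    _ ≤ m * ‖fderiv ℝ f x‖ + m * ‖f x‖ := by gcongr
    _ = m * (‖f x‖ + ‖fderiv ℝ f x‖) := by ring

theorem h1Density_comp_smul_le (c : ℝ) (f : E → F) (x : E) :
    h1Density (fun z => f (c • z)) x ≤ (1 + c ^ 2) * h1Density f (c • x) := by
  have h : ‖fderiv ℝ (fun z => f (c • z)) x‖ ^ 2 = c ^ 2 * ‖fderiv ℝ f (c • x)‖ ^ 2 := by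
    rw [fderiv_comp_smul, norm_smul, mul_pow, norm_eq_abs, sq_abs]
  simp only [h1Density, h]
  nlinarith [sq_nonneg ‖fderiv ℝ f (c • x)‖, mul_nonneg (sq_nonneg c) (sq_nonneg ‖f (c • x)‖)]

end Pointwise

theorem continuousOn_h1Density {f : E → F} {Ω : Set E} (hf : ContDiffOn ℝ ∞ f Ω)
    (hΩ : IsOpen Ω) : ContinuousOn (h1Density f) Ω :=
  (hf.continuousOn.norm.pow 2).add ((hf.continuousOn_fderiv_of_isOpen hΩ (by simp)).norm.pow 2)

variable [MeasurableSpace E] {μ : Measure E}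

theorem IsTestFun.integrable_h1Density [BorelSpace E] [IsFiniteMeasureOnCompacts μ] {U : Set E}
    {f : E → F} (hf : IsTestFun U f) : Integrable (h1Density f) μ :=
  (hf.integrable_comp (φ := fun v => ‖v‖ ^ 2) (by fun_prop) (by simp)).add
    (hf.fderiv.integrable_comp (φ := fun P => ‖P‖ ^ 2) (by fun_prop) (by simp))

theorem IsTestFun.integrableOn_h1Density_sub [BorelSpace E] [IsFiniteMeasureOnCompacts μ]
    {Ω : Set E} {f g : E → F} (hg : IsTestFun Ω g) (hΩ : IsOpen Ω) (hf : ContDiffOn ℝ ∞ f Ω)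
    (hf_int : IntegrableOn (h1Density f) Ω μ) : IntegrableOn (h1Density (f - g)) Ω μ := by
  have hcont := continuousOn_h1Density (hf.sub hg.1.contDiffOn) hΩ
  refine ((hf_int.add hg.integrable_h1Density.integrableOn).const_mul 2).mono'
    (hcont.aestronglyMeasurable hΩ.measurableSet) ?_
  refine (ae_restrict_iff' hΩ.measurableSet).2 (ae_of_all _ fun x hx => ?_)
  rw [Real.norm_of_nonneg (h1Density_nonneg _ x)]
  exact h1Density_sub_le_two_mul_add
    ((hf.contDiffAt (hΩ.mem_nhds hx)).differentiableAt (by simp)) (hg.differentiable x)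

/-- `u` is smooth on `Ω` with finite `H¹(Ω)` norm and `w n` is a sequence of test functions on `Ω`
converging to `u` in this norm, so that `u ∈ H̊¹(Ω; F)`. -/
structure IsH1Approx (μ : Measure E) (Ω : Set E) (u : E → F) (w : ℕ → E → F) : Prop where
  contDiffOn : ContDiffOn ℝ ∞ u Ω
  integrableOn : IntegrableOn (h1Density u) Ω μ
  isTestFun : ∀ n, IsTestFun Ω (w n)
  tendsto : Tendsto (fun n => ∫ x in Ω, h1Density (u - w n) x ∂μ) atTop (𝓝 0)

namespace IsH1Approx

variable {Ω B S : Set E} {u : E → F} {w : ℕ → E → F}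

theorem contDiffAt (h : IsH1Approx μ Ω u w) (hΩ : IsOpen Ω) {x : E} (hx : x ∈ Ω) :
    ContDiffAt ℝ ∞ u x :=
  h.contDiffOn.contDiffAt (hΩ.mem_nhds hx)

theorem differentiableAt (h : IsH1Approx μ Ω u w) (hΩ : IsOpen Ω) {x : E} (hx : x ∈ Ω) :
    DifferentiableAt ℝ u x :=
  (h.contDiffAt hΩ hx).differentiableAt (by simp)

variable [BorelSpace E] [IsFiniteMeasureOnCompacts μ]

theorem integrableOn_sub (h : IsH1Approx μ Ω u w) (hΩ : IsOpen Ω) (n : ℕ) :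
    IntegrableOn (h1Density (u - w n)) Ω μ :=
  (h.isTestFun n).integrableOn_h1Density_sub hΩ h.contDiffOn h.integrableOn

theorem exists_eqOn [FiniteDimensional ℝ E] (h : IsH1Approx μ Ω u w) (hΩ : IsOpen Ω) {K : Set E}
    (hK : IsCompact K) (hKΩ : K ⊆ Ω) :
    ∃ w', IsH1Approx μ Ω u w' ∧ ∀ n, Set.EqOn (w' n) u K := by
  obtain ⟨χ, hχ, hχK⟩ := exists_isTestFun_eq_one hK hΩ hKΩ
  obtain ⟨m, -, hm⟩ := hχ.exists_bound
  have hsub (n : ℕ) {x : E} (hx : x ∈ Ω) : ContDiffAt ℝ ∞ (fun x => u x - w n x) x :=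
    (h.contDiffAt hΩ hx).sub (h.isTestFun n).1.contDiffAt
  let w' (n : ℕ) (x : E) : F := w n x + χ x • (u x - w n x)
  have hbound (n : ℕ) {x : E} (hx : x ∈ Ω) :
      h1Density (u - w' n) x ≤ 3 * (1 + m) ^ 2 * h1Density (u - w n) x := by
    rw [show u - w' n = fun x => (1 - χ x) • (u - w n) x by
      ext1 x; simp [w', sub_smul, sub_sub]]
    refine h1Density_smul_le ((hχ.differentiable x).const_sub 1)
      ((hsub n hx).differentiableAt (by simp)) ?_ ?_
    · simpa using (norm_sub_le 1 (χ x)).trans (add_le_add norm_one.le (hm x).1)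
    · rw [fderiv_const_sub, norm_neg]
      linarith [(hm x).2]
  refine ⟨w', ⟨h.contDiffOn, h.integrableOn, fun n => (h.isTestFun n).add
    (hχ.smul_left fun x hx => hsub n (hχ.2.2 hx)), ?_⟩, fun n x hx => ?_⟩
  · refine squeeze_zero (fun n => integral_nonneg (h1Density_nonneg _)) (fun n => ?_)
      (by simpa using h.tendsto.const_mul (3 * (1 + m) ^ 2))
    rw [← integral_const_mul]
    exact integral_mono_of_nonneg (ae_of_all _ (h1Density_nonneg _))
      ((h.integrableOn_sub hΩ n).const_mul _)
      ((ae_restrict_iff' hΩ.measurableSet).2 (ae_of_all _ fun x => hbound n))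
  · simp [w', hχK.self_of_nhdsSet x hx]

theorem setIntegral_h1Density_le (h : IsH1Approx μ Ω u w) (hΩ : IsOpen Ω) (n : ℕ) :
    ∫ x in Ω, h1Density (w n) x ∂μ ≤
      2 * (∫ x in Ω, h1Density u x ∂μ + ∫ x in Ω, h1Density (u - w n) x ∂μ) := by
  rw [← integral_add h.integrableOn (h.integrableOn_sub hΩ n), ← integral_const_mul]
  refine setIntegral_mono_on (h.isTestFun n).integrable_h1Density.integrableOn
    ((h.integrableOn.add (h.integrableOn_sub hΩ n)).const_mul 2) hΩ.measurableSet fun x hx => ?_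
  exact h1Density_le_two_mul_add ((h.isTestFun n).differentiable x) (h.differentiableAt hΩ hx)

theorem setIntegral_norm_sq_le (h : IsH1Approx μ Ω u w) (hΩ : IsOpen Ω) (hS : MeasurableSet S)
    (n : ℕ) :
    ∫ x in S, ‖w n x‖ ^ 2 ∂μ ≤
      2 * (∫ x in Ω ∩ S, ‖u x‖ ^ 2 ∂μ + ∫ x in Ω, h1Density (u - w n) x ∂μ) := by
  have hu : IntegrableOn (fun x => ‖u x‖ ^ 2) Ω μ :=
    h.integrableOn.mono' ((h.contDiffOn.continuousOn.norm.pow 2).aestronglyMeasurable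
      hΩ.measurableSet) (ae_of_all _ fun x => by
        simpa using norm_sq_le_h1Density u x)
  have hsub := h.integrableOn_sub hΩ n
  calc ∫ x in S, ‖w n x‖ ^ 2 ∂μ = ∫ x in Ω ∩ S, ‖w n x‖ ^ 2 ∂μ := by
        refine setIntegral_eq_of_subset_of_forall_sdiff_eq_zero hS Set.inter_subset_right
          fun x hx => ?_
        have : w n x = 0 := (h.isTestFun n).eq_zero fun hxΩ => hx.2 ⟨hxΩ, hx.1⟩
        simp [this]
    _ ≤ ∫ x in Ω ∩ S, 2 * (‖u x‖ ^ 2 + h1Density (u - w n) x) ∂μ := by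
        refine integral_mono_of_nonneg (ae_of_all _ fun x => sq_nonneg _)
          (IntegrableOn.mono_set ((hu.add hsub).const_mul 2) Set.inter_subset_left)
          (ae_of_all _ fun x => ?_)
        have := norm_sq_le_two_mul_add (w n x) (u x)
        rw [norm_sub_rev] at this
        exact this.trans (mul_le_mul_of_nonneg_left
          (add_le_add_right (norm_sq_le_h1Density (u - w n) x) _) zero_le_two)
    _ = 2 * (∫ x in Ω ∩ S, ‖u x‖ ^ 2 ∂μ + ∫ x in Ω ∩ S, h1Density (u - w n) x ∂μ) := by
        rw [integral_const_mul, integral_add (hu.mono_set Set.inter_subset_left)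
          (hsub.mono_set Set.inter_subset_left)]
    _ ≤ 2 * (∫ x in Ω ∩ S, ‖u x‖ ^ 2 ∂μ + ∫ x in Ω, h1Density (u - w n) x ∂μ) := by
        gcongr
        · exact ae_of_all _ (h1Density_nonneg _)
        · exact Set.inter_subset_left

end IsH1Approx

end H1

/-! ### Quadratic energies and cutoffs -/

theorem integral_sqrt_mul_sqrt_le {X : Type*} [MeasurableSpace X] {μ : Measure X} {f g : X → ℝ}
    (hf : Integrable f μ) (hg : Integrable g μ) (hf₀ : ∀ x, 0 ≤ f x) (hg₀ : ∀ x, 0 ≤ g x) :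
    Integrable (fun x => √(f x) * √(g x)) μ ∧
      ∫ x, √(f x) * √(g x) ∂μ ≤ √(∫ x, f x ∂μ) * √(∫ x, g x ∂μ) := by
  have hmem {h : X → ℝ} (hh : Integrable h μ) (hh₀ : ∀ x, 0 ≤ h x) :
      MemLp (fun x => √(h x)) 2 μ := by
    rw [memLp_two_iff_integrable_sq (continuous_sqrt.comp_aestronglyMeasurable hh.1)]
    simpa only [sq_sqrt (hh₀ _)] using hh
  refine ⟨(hmem hf hf₀).integrable_mul (hmem hg hg₀), ?_⟩
  have := integral_mul_le_Lp_mul_Lq_of_nonneg HolderConjugate.two_two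
    (ae_of_all μ fun x => sqrt_nonneg (f x)) (ae_of_all μ fun x => sqrt_nonneg (g x))
    (by simpa using hmem hf hf₀) (by simpa using hmem hg hg₀)
  simpa only [rpow_two, sq_sqrt (hf₀ _), sq_sqrt (hg₀ _), ← sqrt_eq_rpow] using this

section Energy

variable {E F : Type*} [NormedAddCommGroup E] [NormedSpace ℝ E]
  [NormedAddCommGroup F] [NormedSpace ℝ F]
  {b : (E →L[ℝ] F) →L[ℝ] (E →L[ℝ] F) →L[ℝ] ℝ} {κ : ℝ}

section Pointwise

variable {w ψ : E → F} {η ζ : E → ℝ} {x : E}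

theorem norm_apply_fderiv_le_sqrt (b : (E →L[ℝ] F) →L[ℝ] (E →L[ℝ] F) →L[ℝ] ℝ) (w ψ : E → F)
    (x : E) :
    ‖b (fderiv ℝ w x) (fderiv ℝ ψ x)‖ ≤ ‖b‖ * (√(h1Density w x) * √(h1Density ψ x)) := by
  rw [← mul_assoc]
  refine (b.le_opNorm₂ _ _).trans ?_
  gcongr <;> exact le_sqrt_of_sq_le (norm_fderiv_sq_le_h1Density _ x)

theorem apply_fderiv_smul_left (hη : DifferentiableAt ℝ η x) (hw : DifferentiableAt ℝ w x)
    (hψ : DifferentiableAt ℝ ψ x) :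
    b (fderiv ℝ (fun z => η z • w z) x) (fderiv ℝ ψ x) =
      b (fderiv ℝ w x) (fderiv ℝ (fun z => η z • ψ z) x) +
        (b ((fderiv ℝ η x).smulRight (w x)) (fderiv ℝ ψ x) -
          b (fderiv ℝ w x) ((fderiv ℝ η x).smulRight (ψ x))) := by
  rw [fderiv_fun_smul hη hw, fderiv_fun_smul hη hψ]
  simp only [map_add, map_smul, add_apply, smul_apply]
  ring

theorem apply_fderiv_smul_smul (hb : ∀ P Q, b P Q = b Q P) (hη : DifferentiableAt ℝ η x)
    (hw : DifferentiableAt ℝ w x) :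
    b (fderiv ℝ (fun z => η z • w z) x) (fderiv ℝ (fun z => η z • w z) x) =
      b (fderiv ℝ w x) (fderiv ℝ (fun z => η z • η z • w z) x) +
        b ((fderiv ℝ η x).smulRight (w x)) ((fderiv ℝ η x).smulRight (w x)) := by
  have hsmul : (fderiv ℝ η x).smulRight (η x • w x) = η x • (fderiv ℝ η x).smulRight (w x) := by
    ext v
    exact smul_comm _ _ _
  rw [apply_fderiv_smul_left hη hw (hη.fun_smul hw), fderiv_fun_smul hη hw, hsmul]
  simp only [map_add, map_smul,
    hb (fderiv ℝ w x) ((fderiv ℝ η x).smulRight (w x))]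
  ring

theorem mul_h1Density_smul_le (hb : ∀ P Q, b P Q = b Q P) (hκ₀ : 0 ≤ κ)
    (hκ : ∀ P, κ * ‖P‖ ^ 2 ≤ b P P) {m : ℝ} (hη : DifferentiableAt ℝ η x) (h₀ : ‖η x‖ ≤ m)
    (h₁ : ‖fderiv ℝ η x‖ ≤ m) (hw : DifferentiableAt ℝ w x) :
    κ * h1Density (fun z => η z • w z) x ≤
      b (fderiv ℝ w x) (fderiv ℝ (fun z => η z • η z • w z) x) +
        (κ + ‖b‖) * m ^ 2 * ‖w x‖ ^ 2 := by
  have hval : κ * ‖η x • w x‖ ^ 2 ≤ κ * (m ^ 2 * ‖w x‖ ^ 2) := by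
    rw [norm_smul, mul_pow]
    gcongr
  have hG : ‖(fderiv ℝ η x).smulRight (w x)‖ ≤ m * ‖w x‖ := by
    rw [ContinuousLinearMap.norm_smulRight_apply]
    gcongr
  have hm : 0 ≤ m := (norm_nonneg _).trans h₀
  have hbG : b ((fderiv ℝ η x).smulRight (w x)) ((fderiv ℝ η x).smulRight (w x)) ≤
      ‖b‖ * (m * ‖w x‖) * (m * ‖w x‖) :=
    (le_norm_self _).trans ((b.le_opNorm₂ _ _).trans (by gcongr))
  have hgrad := hκ (fderiv ℝ (fun z => η z • w z) x)
  rw [apply_fderiv_smul_smul hb hη hw] at hgrad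
  rw [h1Density]
  linarith

/-- The commutator vanishes where `Dη = 0`; elsewhere `ζ = 1` near `x`, so `w` may be replaced by
`ζ • w` on the right-hand side. -/
theorem apply_fderiv_smul_clm_le {K : E → F →L[ℝ] F} {m k : ℝ} (hm : 0 ≤ m)
    (hη : DifferentiableAt ℝ η x) (h₀ : ‖η x‖ ≤ m) (h₁ : ‖fderiv ℝ η x‖ ≤ m)
    (hw : DifferentiableAt ℝ w x) (hζ : fderiv ℝ η x ≠ 0 → ζ =ᶠ[𝓝 x] 1)
    (hK : DifferentiableAt ℝ K x) (hk : fderiv ℝ η x ≠ 0 → ‖K x‖ ≤ k ∧ ‖fderiv ℝ K x‖ ≤ k) :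
    b (fderiv ℝ (fun z => η z • w z) x) (fderiv ℝ (fun z => K z (η z • w z)) x) ≤
      b (fderiv ℝ w x) (fderiv ℝ (fun z => η z • K z (η z • w z)) x) +
        ‖b‖ * m * (1 + 9 * k ^ 2 * m ^ 2) * h1Density (fun z => ζ z • w z) x := by
  have hηw : DifferentiableAt ℝ (fun z => η z • w z) x := hη.fun_smul hw
  set ψ := fun z => K z (η z • w z)
  rw [apply_fderiv_smul_left hη hw (hK.clm_apply hηw)]
  gcongr
  by_cases hx : fderiv ℝ η x = 0
  · have := h1Density_nonneg (fun z => ζ z • w z) x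
    simp only [hx, ContinuousLinearMap.zero_smulRight, map_zero, zero_apply, sub_self]
    positivity
  have hζw : h1Density (fun z => ζ z • w z) x = h1Density w x := h1Density_congr <| by
    filter_upwards [hζ hx] with z hz
    simp [hz]
  have hψ_le : h1Density ψ x ≤ 9 * k ^ 2 * m ^ 2 * h1Density w x :=
    calc h1Density ψ x ≤ 3 * k ^ 2 * h1Density (fun z => η z • w z) x :=
          h1Density_clm_apply_le hK hηw (hk hx).1 (hk hx).2
      _ ≤ 3 * k ^ 2 * (3 * m ^ 2 * h1Density w x) := by
          gcongr
          exact h1Density_smul_le hη hw h₀ h₁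
      _ = 9 * k ^ 2 * m ^ 2 * h1Density w x := by ring
  have hsmulRight (v : F) : ‖(fderiv ℝ η x).smulRight v‖ ≤ m * ‖v‖ := by
    rw [ContinuousLinearMap.norm_smulRight_apply]
    gcongr
  calc b ((fderiv ℝ η x).smulRight (w x)) (fderiv ℝ ψ x) -
        b (fderiv ℝ w x) ((fderiv ℝ η x).smulRight (ψ x))
      ≤ ‖b‖ * (m * ‖w x‖) * ‖fderiv ℝ ψ x‖ + ‖b‖ * ‖fderiv ℝ w x‖ * (m * ‖ψ x‖) := by
        refine (le_norm_self _).trans ((norm_sub_le _ _).trans (add_le_add ?_ ?_)) <;>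
          exact (b.le_opNorm₂ _ _).trans (by gcongr; exact hsmulRight _)
    _ = ‖b‖ * m * (‖w x‖ * ‖fderiv ℝ ψ x‖ + ‖fderiv ℝ w x‖ * ‖ψ x‖) := by ring
    _ ≤ ‖b‖ * m * (h1Density w x + h1Density ψ x) := by
        refine mul_le_mul_of_nonneg_left ?_ (by positivity)
        unfold h1Density
        nlinarith [sq_nonneg (‖w x‖ - ‖fderiv ℝ ψ x‖), sq_nonneg (‖fderiv ℝ w x‖ - ‖ψ x‖)]
    _ ≤ ‖b‖ * m * (1 + 9 * k ^ 2 * m ^ 2) * h1Density (fun z => ζ z • w z) x := by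
        rw [hζw, mul_assoc (‖b‖ * m)]
        gcongr
        linarith

end Pointwise

variable [MeasurableSpace E] {μ : Measure E}

/-- The energy form `∫ b(Du, Dv)` of a constant-coefficient second-order system. -/
def energyForm (μ : Measure E) (b : (E →L[ℝ] F) →L[ℝ] (E →L[ℝ] F) →L[ℝ] ℝ) (u v : E → F) : ℝ :=
  ∫ x, b (fderiv ℝ u x) (fderiv ℝ v x) ∂μ

/-- `u` is a weak solution on `U` of the Euler-Lagrange system of the energy `∫ b(Du, Du)`. -/
def IsWeakSolution (μ : Measure E) (b : (E →L[ℝ] F) →L[ℝ] (E →L[ℝ] F) →L[ℝ] ℝ) (U : Set E)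
    (u : E → F) : Prop :=
  ∀ φ, IsTestFun U φ → energyForm μ b u φ = 0

variable [BorelSpace E] [IsFiniteMeasureOnCompacts μ] {Ω U B S : Set E} {u : E → F}
  {w : ℕ → E → F}

theorem IsTestFun.integrable_apply_fderiv {φ : E → F} (hφ : IsTestFun U φ)
    (hu : ∀ x ∈ U, ContDiffAt ℝ ∞ u x) :
    Integrable (fun x => b (fderiv ℝ u x) (fderiv ℝ φ x)) μ :=
  (hφ.fderiv.clm_apply fun x hx => b.contDiff.contDiffAt.comp x
    ((hu x (hφ.fderiv.2.2 hx)).fderiv_right le_rfl)).integrable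

theorem IsH1Approx.energyForm_eq (h : IsH1Approx μ Ω u w) (hΩ : IsOpen Ω)
    (hu : IsWeakSolution μ b (Ω ∩ B) u) {φ : E → F} (hφ : IsTestFun (Ω ∩ B) φ) (n : ℕ) :
    energyForm μ b (w n) φ =
      -∫ x in Ω, b (fderiv ℝ (u - w n) x) (fderiv ℝ φ x) ∂μ := by
  have hφΩ := hφ.mono Set.inter_subset_left
  have hsub : ∫ x in Ω, b (fderiv ℝ (u - w n) x) (fderiv ℝ φ x) ∂μ =
      ∫ x, (b (fderiv ℝ u x) (fderiv ℝ φ x) - b (fderiv ℝ (w n) x) (fderiv ℝ φ x)) ∂μ := by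
    refine (setIntegral_congr_fun hΩ.measurableSet fun x hx => ?_).trans
      (setIntegral_eq_integral_of_forall_compl_eq_zero fun x hx => by
        simp [hφΩ.fderiv_eq_zero hx])
    simp only [fderiv_sub (h.differentiableAt hΩ hx) ((h.isTestFun n).differentiable x), map_sub,
      sub_apply]
  rw [hsub, integral_sub (hφΩ.integrable_apply_fderiv fun x hx => h.contDiffAt hΩ hx)
    (hφΩ.integrable_apply_fderiv fun x _ => (h.isTestFun n).1.contDiffAt)]
  have := hu φ hφ
  simp only [energyForm] at this ⊢
  rw [this, zero_sub, neg_neg]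

theorem IsH1Approx.tendsto_energyForm (h : IsH1Approx μ Ω u w) (hΩ : IsOpen Ω)
    (hu : IsWeakSolution μ b (Ω ∩ B) u) {M : E → F →L[ℝ] F} (hM : IsTestFun B M) :
    Tendsto (fun n => energyForm μ b (w n) fun x => M x (w n x)) atTop (𝓝 0) := by
  obtain ⟨m, -, hm⟩ := hM.exists_bound
  let φ (n : ℕ) (x : E) : F := M x (w n x)
  let ε (n : ℕ) : ℝ := ∫ x in Ω, h1Density (u - w n) x ∂μ
  let H : ℝ := ∫ x in Ω, h1Density u x ∂μ
  have hφ (n : ℕ) : IsTestFun (Ω ∩ B) (φ n) :=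
    ((h.isTestFun n).clm_apply fun x _ => hM.1.contDiffAt).inter
      (hM.apply_left fun x _ => (h.isTestFun n).1.contDiffAt)
  have hφ_le (n : ℕ) : ∫ x in Ω, h1Density (φ n) x ∂μ ≤ 3 * m ^ 2 * (2 * (H + ε n)) := by
    refine le_trans ?_ (mul_le_mul_of_nonneg_left (h.setIntegral_h1Density_le hΩ n)
      (by positivity))
    rw [← integral_const_mul]
    refine integral_mono (hφ n).integrable_h1Density.integrableOn
      ((h.isTestFun n).integrable_h1Density.integrableOn.const_mul _) fun x => ?_
    exact h1Density_clm_apply_le (hM.differentiable x) ((h.isTestFun n).differentiable x)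
      (hm x).1 (hm x).2
  have hbound (n : ℕ) : ‖energyForm μ b (w n) (φ n)‖ ≤
      ‖b‖ * (√(ε n) * √(3 * m ^ 2 * (2 * (H + ε n)))) := by
    have hsqrt := integral_sqrt_mul_sqrt_le (h.integrableOn_sub hΩ n)
      (hφ n).integrable_h1Density.integrableOn (h1Density_nonneg _) (h1Density_nonneg _)
    rw [h.energyForm_eq hΩ hu (hφ n), norm_neg]
    refine (norm_integral_le_of_norm_le (hsqrt.1.const_mul ‖b‖)
      (ae_of_all _ (norm_apply_fderiv_le_sqrt b (u - w n) (φ n)))).trans ?_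
    rw [integral_const_mul]
    gcongr
    exact hsqrt.2.trans (by gcongr; exact hφ_le n)
  refine squeeze_zero_norm hbound ?_
  have hε : Tendsto ε atTop (𝓝 0) := h.tendsto
  simpa using ((hε.sqrt.mul (((hε.const_add H).const_mul 2).const_mul (3 * m ^ 2)).sqrt).const_mul
    ‖b‖)

/-- A cutoff `η` inside `B` together with a second cutoff `ζ` inside `S`, which is `1` where `η` is
not locally constant. -/
structure IsCutoffPair (B S : Set E) (η ζ : E → ℝ) : Prop where
  isTestFun_left : IsTestFun B η
  isTestFun_right : IsTestFun S ζ
  eventuallyEq_one : ∀ x, fderiv ℝ η x ≠ 0 → ζ =ᶠ[𝓝 x] 1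

theorem caccioppoli (hb : ∀ P Q, b P Q = b Q P) (hκ₀ : 0 ≤ κ) (hκ : ∀ P, κ * ‖P‖ ^ 2 ≤ b P P)
    {ζ : E → ℝ} {m : ℝ} (hζ : IsTestFun S ζ) (hm : ∀ x, ‖ζ x‖ ≤ m ∧ ‖fderiv ℝ ζ x‖ ≤ m)
    {v : E → F} (hv : IsTestFun U v) :
    κ * ∫ x, h1Density (fun z => ζ z • v z) x ∂μ ≤
      energyForm μ b v (fun z => ζ z • ζ z • v z) +
        (κ + ‖b‖) * m ^ 2 * ∫ x in S, ‖v x‖ ^ 2 ∂μ := by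
  have hζv : IsTestFun S fun z => ζ z • v z := hζ.smul_left fun x _ => hv.1.contDiffAt
  have hζζv : IsTestFun S fun z => ζ z • ζ z • v z := hζv.smul_right hζ.1
  have hint : Integrable (fun x => b (fderiv ℝ v x) (fderiv ℝ (fun z => ζ z • ζ z • v z) x)) μ :=
    hζζv.integrable_apply_fderiv fun x _ => hv.1.contDiffAt
  have hnorm : Integrable (fun x => ‖v x‖ ^ 2) μ :=
    hv.integrable_comp (φ := fun p => ‖p‖ ^ 2) (by fun_prop) (by simp)
  have hleft : ∫ x in S, h1Density (fun z => ζ z • v z) x ∂μ = ∫ x, h1Density _ x ∂μ :=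
    setIntegral_eq_integral_of_forall_compl_eq_zero fun x hx => by
      rw [h1Density, hζv.eq_zero hx, hζv.fderiv_eq_zero hx]
      simp
  have hright : ∫ x in S, b (fderiv ℝ v x) (fderiv ℝ (fun z => ζ z • ζ z • v z) x) ∂μ =
      energyForm μ b v _ :=
    setIntegral_eq_integral_of_forall_compl_eq_zero fun x hx => by
      rw [hζζv.fderiv_eq_zero hx, map_zero]
  rw [← hleft, ← hright, ← integral_const_mul, ← integral_const_mul,
    ← integral_add hint.integrableOn (hnorm.integrableOn.const_mul _)]
  exact integral_mono (hζv.integrable_h1Density.integrableOn.const_mul κ)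
    (hint.integrableOn.add (hnorm.integrableOn.const_mul _)) fun x =>
      mul_h1Density_smul_le hb hκ₀ hκ (hζ.differentiable x) (hm x).1 (hm x).2
        (hv.differentiable x)

namespace IsCutoffPair

variable {η ζ : E → ℝ}

theorem energyForm_smul_le (hη : IsCutoffPair B S η ζ) {m k : ℝ} (hm₀ : 0 ≤ m)
    (hm : ∀ x, ‖η x‖ ≤ m ∧ ‖fderiv ℝ η x‖ ≤ m) {K : E → F →L[ℝ] F} (hK : ContDiff ℝ ∞ K)
    (hk : ∀ x, fderiv ℝ η x ≠ 0 → ‖K x‖ ≤ k ∧ ‖fderiv ℝ K x‖ ≤ k) {v : E → F}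
    (hv : IsTestFun U v) :
    energyForm μ b (fun z => η z • v z) (fun z => K z (η z • v z)) ≤
      energyForm μ b v (fun z => η z • K z (η z • v z)) +
        ‖b‖ * m * (1 + 9 * k ^ 2 * m ^ 2) * ∫ x, h1Density (fun z => ζ z • v z) x ∂μ := by
  have hηv := hv.smul_right hη.isTestFun_left.1
  have hKηv : IsTestFun U fun z => K z (η z • v z) := hηv.clm_apply fun x _ => hK.contDiffAt
  have hint := (hKηv.smul_right hη.isTestFun_left.1).integrable_apply_fderiv (b := b) (μ := μ)
    fun x _ => hv.1.contDiffAt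
  have hζv := (hv.smul_right hη.isTestFun_right.1).integrable_h1Density (μ := μ)
  rw [energyForm, energyForm, ← integral_const_mul, ← integral_add hint (hζv.const_mul _)]
  exact integral_mono (hKηv.integrable_apply_fderiv fun x _ => hηv.1.contDiffAt)
    (hint.add (hζv.const_mul _)) fun x =>
      apply_fderiv_smul_clm_le hm₀ (hη.isTestFun_left.differentiable x) (hm x).1 (hm x).2
        (hv.differentiable x) (hη.eventuallyEq_one x) (hK.differentiable (by simp) x) (hk x)

theorem exists_energyForm_le (hη : IsCutoffPair B S η ζ) (hS : MeasurableSet S) (hSB : S ⊆ B)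
    (hb : ∀ P Q, b P Q = b Q P) (hκ₀ : 0 < κ) (hκ : ∀ P, κ * ‖P‖ ^ 2 ≤ b P P) (k : ℝ) :
    ∃ C, 0 ≤ C ∧ ∀ (Ω : Set E) (u : E → F) (w : ℕ → E → F) (K : E → F →L[ℝ] F), IsOpen Ω →
      IsH1Approx μ Ω u w → IsWeakSolution μ b (Ω ∩ B) u → ContDiff ℝ ∞ K →
      (∀ x, fderiv ℝ η x ≠ 0 → ‖K x‖ ≤ k ∧ ‖fderiv ℝ K x‖ ≤ k) →
      ∃ e : ℕ → ℝ, Tendsto e atTop (𝓝 0) ∧ ∀ n,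
        energyForm μ b (fun x => η x • w n x) (fun x => K x (η x • w n x)) ≤
          C * ∫ x in Ω ∩ S, ‖u x‖ ^ 2 ∂μ + e n := by
  obtain ⟨m, hm₀, hm⟩ := hη.isTestFun_left.exists_bound
  obtain ⟨m', -, hm'⟩ := hη.isTestFun_right.exists_bound
  let C₁ := ‖b‖ * m * (1 + 9 * k ^ 2 * m ^ 2) / κ
  let C₂ := (κ + ‖b‖) * m' ^ 2
  refine ⟨C₁ * (C₂ * 2), by positivity, fun Ω u w K hΩ h hu hK hk => ?_⟩
  let I₁ (n : ℕ) : ℝ := energyForm μ b (w n) fun x => η x • K x (η x • w n x)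
  let I₂ (n : ℕ) : ℝ := energyForm μ b (w n) fun x => ζ x • ζ x • w n x
  let ε (n : ℕ) : ℝ := ∫ x in Ω, h1Density (u - w n) x ∂μ
  have hI₁ : Tendsto I₁ atTop (𝓝 0) := by
    have hM : IsTestFun B fun x => η x • η x • K x :=
      (hη.isTestFun_left.smul_left fun x _ => hK.contDiffAt).smul_right hη.isTestFun_left.1
    simpa [I₁] using h.tendsto_energyForm hΩ hu hM
  have hI₂ : Tendsto I₂ atTop (𝓝 0) := by
    have hM : IsTestFun B fun x => ζ x • ζ x • ContinuousLinearMap.id ℝ F :=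
      ((hη.isTestFun_right.mono hSB).smul_left fun x _ => contDiffAt_const).smul_right
        hη.isTestFun_right.1
    simpa [I₂] using h.tendsto_energyForm hΩ hu hM
  refine ⟨fun n => I₁ n + C₁ * (I₂ n + C₂ * 2 * ε n), ?_, fun n => ?_⟩
  · simpa using hI₁.add ((hI₂.add (h.tendsto.const_mul (C₂ * 2))).const_mul C₁)
  have hcut := hη.energyForm_smul_le (b := b) (μ := μ) hm₀ hm hK hk (h.isTestFun n)
  have hcacc := caccioppoli (μ := μ) hb hκ₀.le hκ hη.isTestFun_right hm' (h.isTestFun n)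
  calc energyForm μ b (fun x => η x • w n x) (fun x => K x (η x • w n x))
      ≤ I₁ n + C₁ * (κ * ∫ x, h1Density (fun z => ζ z • w n z) x ∂μ) := by
        rwa [← mul_assoc, div_mul_cancel₀ _ hκ₀.ne']
    _ ≤ I₁ n + C₁ * (I₂ n + C₂ * (2 * (∫ x in Ω ∩ S, ‖u x‖ ^ 2 ∂μ + ε n))) := by
        gcongr
        refine hcacc.trans (add_le_add_right ?_ _)
        gcongr
        exact h.setIntegral_norm_sq_le hΩ hS n
    _ = C₁ * (C₂ * 2) * ∫ x in Ω ∩ S, ‖u x‖ ^ 2 ∂μ +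
        (I₁ n + C₁ * (I₂ n + C₂ * 2 * ε n)) := by ring

end IsCutoffPair

end Energy

section Cutoff

variable {E G : Type*} [NormedAddCommGroup E] [NormedSpace ℝ E] [FiniteDimensional ℝ E]
  [NormedAddCommGroup G] [NormedSpace ℝ G]

theorem isCompact_setOf_le_norm_le (a b : ℝ) : IsCompact {x : E | a ≤ ‖x‖ ∧ ‖x‖ ≤ b} := by
  have := FiniteDimensional.proper ℝ E
  refine (isCompact_closedBall (0 : E) b).of_isClosed_subset
    ((isClosed_le continuous_const continuous_norm).inter
      (isClosed_le continuous_norm continuous_const)) fun x hx => ?_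
  simpa using hx.2

theorem exists_isCutoffPair {s s' t : ℝ} (hs : s < s') (ht : s' < t) :
    ∃ η ζ : E → ℝ, IsCutoffPair (ball 0 t) {x | s < ‖x‖ ∧ ‖x‖ < t} η ζ ∧
      (∀ x ∈ ball 0 s', η x = 1) ∧ ∀ x, fderiv ℝ η x ≠ 0 → s' ≤ ‖x‖ ∧ ‖x‖ ≤ t := by
  have := FiniteDimensional.proper ℝ E
  obtain ⟨t', hst', ht'⟩ := exists_between ht
  obtain ⟨η, hη, hη₁⟩ := exists_isTestFun_eq_one (isCompact_closedBall (0 : E) s')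
    (isOpen_ball (x := 0) (ε := t')) (closedBall_subset_ball hst')
  obtain ⟨ζ, hζ, hζ₁⟩ := exists_isTestFun_eq_one (isCompact_setOf_le_norm_le (E := E) s' t')
    ((isOpen_lt continuous_const continuous_norm).inter
      (isOpen_lt continuous_norm continuous_const) : IsOpen {x : E | s < ‖x‖ ∧ ‖x‖ < t})
    fun x hx => ⟨hs.trans_le hx.1, hx.2.trans_lt ht'⟩
  rw [eventually_nhdsSet_iff_forall] at hη₁ hζ₁
  have hη_one : ∀ x ∈ ball 0 s', η x = 1 := fun x hx =>
    (hη₁ x (ball_subset_closedBall hx)).self_of_nhds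
  have hη_shell : ∀ x, fderiv ℝ η x ≠ 0 → s' ≤ ‖x‖ ∧ ‖x‖ ≤ t' := fun x hx => by
    refine ⟨?_, ?_⟩ <;> by_contra! hlt
    · refine hx (EventuallyEq.fderiv_eq (f := fun _ => (1 : ℝ)) ?_ |>.trans (by simp))
      exact eventually_of_mem (isOpen_ball.mem_nhds (by simpa using hlt)) hη_one
    · exact hx (hη.fderiv_eq_zero (by simpa using hlt.le))
  exact ⟨η, ζ, ⟨hη.mono (ball_subset_ball ht'.le), hζ, fun x hx => hζ₁ x (hη_shell x hx)⟩, hη_one,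
    fun x hx => (hη_shell x hx).imp_right ht'.le.trans'⟩

variable {k : E → G}

theorem exists_contDiff_eq_of_notMem_ball (hk : ∀ z ≠ 0, ContDiffAt ℝ ∞ k z) (y : E) {r : ℝ}
    (hr : 0 < r) : ∃ K : E → G, ContDiff ℝ ∞ K ∧ ∀ x ∉ ball y r, K x = k (x - y) := by
  obtain ⟨χ, hχ, hχ₁⟩ := exists_isTestFun_eq_one (isCompact_singleton (x := y)) isOpen_ball
    (Set.singleton_subset_iff.2 (mem_ball_self hr))
  rw [nhdsSet_singleton] at hχ₁
  refine ⟨fun x => (1 - χ x) • k (x - y), contDiff_iff_contDiffAt.2 fun x => ?_, fun x hx => ?_⟩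
  · obtain rfl | hxy := eq_or_ne x y
    · refine (contDiffAt_const (c := (0 : G))).congr_of_eventuallyEq ?_
      filter_upwards [hχ₁] with z hz
      simp [hz]
    · exact (contDiffAt_const.sub hχ.1.contDiffAt).smul
        ((hk _ (sub_ne_zero.2 hxy)).comp x (by fun_prop))
  · simp [hχ.eq_zero hx]

theorem exists_bound_of_le_norm (hk : ∀ z ≠ 0, ContDiffAt ℝ ∞ k z) {a : ℝ} (ha : 0 < a) (b : ℝ) :
    ∃ m, ∀ z, a ≤ ‖z‖ → ‖z‖ ≤ b → ‖k z‖ ≤ m ∧ ‖fderiv ℝ k z‖ ≤ m := by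
  have hshell := isCompact_setOf_le_norm_le (E := E) a b
  have hne {z : E} (hz : a ≤ ‖z‖) : z ≠ 0 := norm_pos_iff.1 (ha.trans_le hz)
  obtain ⟨m₀, hm₀⟩ := hshell.exists_bound_of_continuousOn (f := k) fun z hz =>
    (hk z (hne hz.1)).continuousAt.continuousWithinAt
  obtain ⟨m₁, hm₁⟩ := hshell.exists_bound_of_continuousOn (f := fderiv ℝ k) fun z hz =>
    ((hk z (hne hz.1)).fderiv_right (m := ∞) le_rfl).continuousAt.continuousWithinAt
  exact ⟨max m₀ m₁, fun z hz hzb => ⟨(hm₀ z ⟨hz, hzb⟩).trans (le_max_left _ _),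
    (hm₁ z ⟨hz, hzb⟩).trans (le_max_right _ _)⟩⟩

theorem exists_contDiff_eq_norm_le (hk : ∀ z ≠ 0, ContDiffAt ℝ ∞ k z) {a : ℝ} (ha : 0 < a)
    (b : ℝ) :
    ∃ m, ∀ (y : E) (r : ℝ), 0 < r → r < a → ∃ K : E → G, ContDiff ℝ ∞ K ∧
      (∀ x ∉ ball y r, K x = k (x - y)) ∧
      ∀ x, a ≤ ‖x - y‖ → ‖x - y‖ ≤ b → ‖K x‖ ≤ m ∧ ‖fderiv ℝ K x‖ ≤ m := by
  obtain ⟨m, hm⟩ := exists_bound_of_le_norm hk ha b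
  refine ⟨m, fun y r hr hra => ?_⟩
  obtain ⟨K, hK, hKk⟩ := exists_contDiff_eq_of_notMem_ball hk y hr
  refine ⟨K, hK, hKk, fun x hax hxb => ?_⟩
  have hKk_near : K =ᶠ[𝓝 x] fun z => k (z - y) := by
    have hx : x ∈ (closedBall y r)ᶜ := by
      simpa [dist_eq_norm] using hra.trans_le hax
    filter_upwards [isClosed_closedBall.isOpen_compl.mem_nhds hx] with z hz
    exact hKk z fun hzr => hz (ball_subset_closedBall hzr)
  rw [hKk_near.fderiv_eq, fderiv_comp_sub, hKk_near.self_of_nhds]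
  exact hm _ hax hxb

end Cutoff

/-! ### The Lamé system -/

section LameForm

variable {ι : Type*} [Fintype ι]

theorem norm_sq_le_sum_sq (v : ι → ℝ) : ‖v‖ ^ 2 ≤ ∑ i, v i ^ 2 := by
  refine (sq_le_sq₀ (norm_nonneg v) (sqrt_nonneg _)).2 ?_ |>.trans_eq
    (sq_sqrt (Finset.sum_nonneg fun i _ => sq_nonneg (v i)))
  refine (pi_norm_le_iff_of_nonneg (sqrt_nonneg _)).2 fun i => ?_
  rw [norm_eq_abs]
  exact abs_le_sqrt (Finset.single_le_sum (f := fun i => v i ^ 2)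
    (fun j _ => sq_nonneg (v j)) (Finset.mem_univ i))

theorem sum_sq_le_card_mul_norm_sq (v : ι → ℝ) : ∑ i, v i ^ 2 ≤ Fintype.card ι * ‖v‖ ^ 2 := by
  rw [← nsmul_eq_mul, ← Finset.card_univ]
  refine Finset.sum_le_card_nsmul _ _ _ fun i _ => ?_
  rw [← sq_abs, ← norm_eq_abs]
  gcongr
  exact norm_le_pi_norm v i

variable [DecidableEq ι]

/-- The coordinate functional `P ↦ P_ik`, so that `entry i k (Du) = ∂ₖuᵢ`. -/
def entry (i k : ι) : (EuclideanSpace ℝ ι →L[ℝ] (ι → ℝ)) →L[ℝ] ℝ :=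
  (ContinuousLinearMap.proj i).comp
    (ContinuousLinearMap.apply ℝ (ι → ℝ) (EuclideanSpace.single k (1 : ℝ)))

/-- The squared Frobenius norm `|P|² = ∑ P_ik²`. -/
def frobSq (P : EuclideanSpace ℝ ι →L[ℝ] (ι → ℝ)) : ℝ :=
  ∑ i, ∑ k, entry i k P ^ 2

variable (P Q : EuclideanSpace ℝ ι →L[ℝ] (ι → ℝ))

@[simp]
theorem entry_apply (i k : ι) : entry i k P = P (EuclideanSpace.single k 1) i :=
  rfl

theorem frobSq_nonneg : 0 ≤ frobSq P :=
  Finset.sum_nonneg fun _ _ => Finset.sum_nonneg fun _ _ => sq_nonneg _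

@[simp]
theorem frobSq_zero : frobSq (0 : EuclideanSpace ℝ ι →L[ℝ] (ι → ℝ)) = 0 := by
  simp [frobSq]

theorem continuous_frobSq : Continuous (frobSq (ι := ι)) := by
  unfold frobSq
  fun_prop

theorem frobSq_smul (c : ℝ) : frobSq (c • P) = c ^ 2 * frobSq P := by
  simp only [frobSq, map_smul, smul_eq_mul, mul_pow, Finset.mul_sum]

theorem frobSq_le_two_mul_add : frobSq P ≤ 2 * frobSq Q + 2 * frobSq (P - Q) := by
  simp only [frobSq, Finset.mul_sum, ← Finset.sum_add_distrib, map_sub]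
  gcongr with i _ k _
  linarith [sq_nonneg (2 * entry i k Q - entry i k P)]

theorem norm_sq_le_frobSq : ‖P‖ ^ 2 ≤ frobSq P := by
  refine (sq_le_sq₀ (norm_nonneg P) (sqrt_nonneg _)).2 ?_ |>.trans_eq (sq_sqrt (frobSq_nonneg P))
  refine P.opNorm_le_bound (sqrt_nonneg _) fun v => ?_
  refine le_of_sq_le_sq ?_ (by positivity)
  rw [mul_pow, sq_sqrt (frobSq_nonneg P), EuclideanSpace.real_norm_sq_eq, frobSq, Finset.sum_mul]
  refine (norm_sq_le_sum_sq _).trans (Finset.sum_le_sum fun i _ => ?_)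
  have hv : P v i = ∑ k, entry i k P * v k := by
    conv_lhs => rw [← (EuclideanSpace.basisFun ι ℝ).sum_repr v]
    simp [mul_comm]
  rw [hv]
  exact Finset.sum_mul_sq_le_sq_mul_sq _ _ _

theorem frobSq_le_card_sq_mul_norm_sq : frobSq P ≤ (Fintype.card ι : ℝ) ^ 2 * ‖P‖ ^ 2 := by
  have hentry (i k : ι) : entry i k P ^ 2 ≤ ‖P‖ ^ 2 := by
    rw [← sq_abs, entry_apply]
    gcongr
    refine (norm_le_pi_norm (P _) i).trans ((P.le_opNorm _).trans_eq ?_)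
    rw [PiLp.norm_single, norm_one, mul_one]
  calc frobSq P ≤ ∑ _i : ι, ∑ _k : ι, ‖P‖ ^ 2 :=
        Finset.sum_le_sum fun i _ => Finset.sum_le_sum fun k _ => hentry i k
    _ = (Fintype.card ι : ℝ) ^ 2 * ‖P‖ ^ 2 := by
        simp only [Finset.sum_const, Finset.card_univ, nsmul_eq_mul]
        ring

variable (α : ℝ)

/-- The stress `P_ik + α⁺ δ_ik tr P - α⁻ P_ki`, whose divergence is that of `P_ik + α δ_ik tr P`
when `P` is a gradient. The swapped last term makes `lameForm` coercive down to `α = -1`. -/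
def lameStress (i k : ι) : (EuclideanSpace ℝ ι →L[ℝ] (ι → ℝ)) →L[ℝ] ℝ :=
  entry i k + (if i = k then α⁺ else 0) • ∑ j, entry j j - α⁻ • entry k i

/-- The bilinear form `∑ lameStress_ik(P) Q_ik` of the Lamé system. -/
def lameForm : (EuclideanSpace ℝ ι →L[ℝ] (ι → ℝ)) →L[ℝ]
    (EuclideanSpace ℝ ι →L[ℝ] (ι → ℝ)) →L[ℝ] ℝ :=
  ∑ i, ∑ k, (lameStress α i k).smulRight (entry i k)

theorem lameForm_apply : lameForm α P Q = ∑ i, ∑ k, lameStress α i k P * entry i k Q := by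
  simp [lameForm]

theorem lameForm_eq : lameForm α P Q = ∑ i, ∑ k, entry i k P * entry i k Q +
    α⁺ * ((∑ j, entry j j P) * ∑ j, entry j j Q) - α⁻ * ∑ i, ∑ k, entry k i P * entry i k Q := by
  simp only [lameForm_apply, lameStress, sub_apply, add_apply, smul_apply, smul_eq_mul, sub_mul,
    add_mul, ite_mul, zero_mul, Finset.sum_add_distrib, Finset.sum_sub_distrib, mul_assoc,
    Finset.sum_ite_eq, Finset.mem_univ, if_true, ← Finset.mul_sum, sum_apply]

theorem lameForm_comm : lameForm α P Q = lameForm α Q P := by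
  rw [lameForm_eq, lameForm_eq, Finset.sum_comm (f := fun i k => entry k i P * entry i k Q)]
  simp only [mul_comm]

theorem mul_norm_sq_le_lameForm (hα : -1 < α) : (1 - α⁻) * ‖P‖ ^ 2 ≤ lameForm α P P := by
  have hα' : α⁻ ≤ 1 := max_le (by linarith) zero_le_one
  have hswap : ∑ i, ∑ k, entry k i P * entry i k P ≤ frobSq P := by
    have hcomm : ∑ i, ∑ k, entry k i P ^ 2 = frobSq P := Finset.sum_comm
    calc ∑ i, ∑ k, entry k i P * entry i k P
        ≤ ∑ i, ∑ k, (entry k i P ^ 2 / 2 + entry i k P ^ 2 / 2) := by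
          gcongr with i _ k _
          linarith [sq_nonneg (entry k i P - entry i k P)]
      _ = frobSq P := by
          simp only [Finset.sum_add_distrib, ← Finset.sum_div, hcomm]
          exact add_halves _
  have htrace : 0 ≤ α⁺ * ((∑ j, entry j j P) * ∑ j, entry j j P) :=
    mul_nonneg (posPart_nonneg α) (mul_self_nonneg _)
  have hfrob : ∑ i, ∑ k, entry i k P * entry i k P = frobSq P := by
    simp only [frobSq, sq]
  have hneg := mul_le_mul_of_nonneg_left hswap (negPart_nonneg α)
  have hnorm := mul_le_mul_of_nonneg_left (norm_sq_le_frobSq P) (sub_nonneg.2 hα')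
  rw [lameForm_eq, hfrob]
  linarith

end LameForm

section WeakForm

section IntegrationByParts

theorem integral_sum_sum {X ι κ : Type*} [MeasurableSpace X] {μ : Measure X} [Fintype ι]
    [Fintype κ] {f : ι → κ → X → ℝ} (hf : ∀ i k, Integrable (f i k) μ) :
    ∫ x, ∑ i, ∑ k, f i k x ∂μ = ∑ i, ∑ k, ∫ x, f i k x ∂μ := by
  rw [integral_finsetSum _ fun i _ => integrable_finsetSum _ fun k _ => hf i k]
  simp only [integral_finsetSum _ fun k _ => hf _ k]

variable {E : Type*} [NormedAddCommGroup E] [NormedSpace ℝ E] [MeasurableSpace E] [BorelSpace E]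
  {μ : Measure E} {U : Set E} {f φ : E → ℝ}

theorem IsTestFun.integrable_mul [IsFiniteMeasureOnCompacts μ] (hφ : IsTestFun U φ)
    (hf : ∀ x ∈ U, ContDiffAt ℝ ∞ f x) : Integrable (fun x => f x * φ x) μ := by
  simpa only [smul_eq_mul, mul_comm] using
    (hφ.smul_left fun x hx => hf x (hφ.2.2 hx)).integrable (μ := μ)

theorem IsTestFun.integral_mul_fderiv_apply [FiniteDimensional ℝ E] [μ.IsAddHaarMeasure]
    (hφ : IsTestFun U φ) (hf : ∀ x ∈ U, ContDiffAt ℝ ∞ f x) (v : E) :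
    ∫ x, f x * fderiv ℝ φ x v ∂μ = -∫ x, fderiv ℝ f x v * φ x ∂μ :=
  integral_mul_fderiv_eq_neg_fderiv_mul_of_integrable
    (hφ.integrable_mul fun x hx => ((hf x hx).fderiv_right le_rfl).clm_apply contDiffAt_const)
    ((hφ.fderiv_apply v).integrable_mul hf) (hφ.integrable_mul hf)
    (fun x hx => (hf x (hφ.2.2 hx)).differentiableAt (by simp)) fun x _ => hφ.differentiable x

end IntegrationByParts

variable {u v : E3 → Fin 3 → ℝ} {x : E3} {α : ℝ}

theorem pd_eq_entry_fderiv (hu : DifferentiableAt ℝ u x) (i k : Fin 3) :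
    pd k (fun z => u z i) x = entry i k (fderiv ℝ u x) := by
  rw [pd, (hasFDerivAt_pi'.1 hu.hasFDerivAt i).fderiv]
  rfl

theorem sum_pd_sq_eq_frobSq (hu : DifferentiableAt ℝ u x) :
    ∑ i, ∑ k, pd k (fun z => u z i) x ^ 2 = frobSq (fderiv ℝ u x) := by
  simp only [frobSq, pd_eq_entry_fderiv hu]

theorem pd_clm_comp_fderiv (hu : ContDiffAt ℝ 2 u x) {f : E3 → ℝ}
    (L : (E3 →L[ℝ] (Fin 3 → ℝ)) →L[ℝ] ℝ) (hf : f =ᶠ[𝓝 x] fun z => L (fderiv ℝ u z)) (k : Fin 3) :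
    pd k f x = L (fderiv ℝ (fderiv ℝ u) x (EuclideanSpace.single k 1)) := by
  have hDu : DifferentiableAt ℝ (fderiv ℝ u) x :=
    (hu.fderiv_right (m := 1) (by norm_num)).differentiableAt one_ne_zero
  rw [pd, hf.fderiv_eq, fderiv_fun_comp x L.differentiableAt hDu, L.fderiv]
  rfl

theorem lame_eq_neg_sum_lameStress (hu : ContDiffAt ℝ 2 u x) (i : Fin 3) :
    lame α u x i = -∑ k, lameStress α i k
      (fderiv ℝ (fderiv ℝ u) x (EuclideanSpace.single k 1)) := by
  let D := fun k => fderiv ℝ (fderiv ℝ u) x (EuclideanSpace.single k 1)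
  have hdiff : ∀ᶠ z in 𝓝 x, DifferentiableAt ℝ u z :=
    (hu.eventually (by simp)).mono fun z hz => hz.differentiableAt two_ne_zero
  have hlap : lap (fun z => u z i) x = ∑ k, entry i k (D k) :=
    Finset.sum_congr rfl fun k _ => pd_clm_comp_fderiv hu (entry i k)
      (hdiff.mono fun z hz => pd_eq_entry_fderiv hz i k) k
  have hdiv : pd i (divg u) x = ∑ j, entry j j (D i) := by
    rw [pd_clm_comp_fderiv hu (∑ j, entry j j) (hdiff.mono fun z hz => ?_) i]
    · simp [D]
    · simp only [divg, pd_eq_entry_fderiv hz, sum_apply]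
  have hsymm (k : Fin 3) : entry k i (D k) = entry k k (D i) := by
    have := (hu.isSymmSndFDerivAt (by simp)).eq (EuclideanSpace.single k 1)
      (EuclideanSpace.single i 1)
    simp only [entry_apply, D, this]
  rw [lame, hlap, hdiv]
  change _ = -∑ k, lameStress α i k (D k)
  conv_lhs => rw [← posPart_sub_negPart α]
  simp only [lameStress, sub_apply, add_apply, smul_apply, sum_apply, smul_eq_mul, hsymm,
    Finset.sum_add_distrib, Finset.sum_sub_distrib, ite_mul, zero_mul, Finset.sum_ite_eq,
    Finset.mem_univ, if_true, ← Finset.mul_sum]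
  ring

theorem energyForm_lameForm_eq {U : Set E3} (hu : ∀ x ∈ U, ContDiffAt ℝ ∞ u x)
    (hv : IsTestFun U v) :
    energyForm volume (lameForm α) u v = ∫ x, ∑ i, lame α u x i * v x i := by
  have hvi (i : Fin 3) : IsTestFun U fun x => v x i :=
    hv.clm_comp (ContinuousLinearMap.proj (R := ℝ) (φ := fun _ : Fin 3 => ℝ) i)
  let s (i k : Fin 3) (x : E3) : ℝ := lameStress α i k (fderiv ℝ u x)
  have hs (i k : Fin 3) : ∀ x ∈ U, ContDiffAt ℝ ∞ (s i k) x := fun x hx =>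
    (lameStress α i k).contDiff.contDiffAt.comp x ((hu x hx).fderiv_right le_rfl)
  have hlame (i : Fin 3) (x : E3) : lame α u x i * v x i =
      ∑ k, -(fderiv ℝ (s i k) x (EuclideanSpace.single k 1) * v x i) := by
    by_cases hx : x ∈ U
    · have hx2 : ContDiffAt ℝ 2 u x := contDiffAt_infty.1 (hu x hx) 2
      rw [lame_eq_neg_sum_lameStress hx2, Finset.sum_neg_distrib, ← Finset.sum_mul, neg_mul]
      exact congrArg (fun c => -(c * v x i)) (Finset.sum_congr rfl fun k _ =>
        (pd_clm_comp_fderiv hx2 (lameStress α i k) EventuallyEq.rfl k).symm)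
    · simp [hv.eq_zero hx]
  have hint (i k : Fin 3) : Integrable fun x =>
      fderiv ℝ (s i k) x (EuclideanSpace.single k 1) * v x i :=
    (hvi i).integrable_mul fun x hx => ((hs i k x hx).fderiv_right le_rfl).clm_apply
      contDiffAt_const
  calc energyForm volume (lameForm α) u v
      = ∫ x, ∑ i, ∑ k, s i k x * pd k (fun z => v z i) x := by
        simp only [energyForm, lameForm_apply, pd_eq_entry_fderiv (hv.differentiable _), s]
    _ = ∑ i, ∑ k, ∫ x, s i k x * pd k (fun z => v z i) x := by
        have hpd (i k : Fin 3) : Integrable fun x => s i k x * pd k (fun z => v z i) x :=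
          ((hvi i).fderiv_apply _).integrable_mul (hs i k)
        exact integral_sum_sum hpd
    _ = ∑ i, ∑ k, ∫ x, -(fderiv ℝ (s i k) x (EuclideanSpace.single k 1) * v x i) := by
        simp only [integral_neg, pd, (hvi _).integral_mul_fderiv_apply (hs _ _)]
    _ = ∫ x, ∑ i, lame α u x i * v x i := by
        simp only [hlame]
        exact (integral_sum_sum fun i k => (hint i k).neg).symm

theorem isWeakSolution_lameForm {U : Set E3} (hu : ∀ x ∈ U, ContDiffAt ℝ ∞ u x)
    (hlame : ∀ x ∈ U, ∀ i, lame α u x i = 0) : IsWeakSolution volume (lameForm α) U u := by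
  intro φ hφ
  rw [energyForm_lameForm_eq hu hφ]
  refine integral_eq_zero_of_ae (ae_of_all _ fun x => ?_)
  by_cases hx : x ∈ U
  · simp [hlame x hx]
  · simp [hφ.eq_zero hx]

end WeakForm

section WeightedEnergy

variable {ι : Type*} [Fintype ι] [DecidableEq ι] {y : EuclideanSpace ℝ ι} {r : ℝ}

/-- Near `y` the singular weight meets no error, because there `w = u`. -/
theorem frobSq_fderiv_mul_inv_le {u w : EuclideanSpace ℝ ι → ι → ℝ} {x : EuclideanSpace ℝ ι}
    (hu : DifferentiableAt ℝ u x) (hw : DifferentiableAt ℝ w x) (hr : 0 < r)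
    (hwu : Set.EqOn w u (ball y r)) :
    frobSq (fderiv ℝ u x) * ‖x - y‖⁻¹ ≤ 2 * (frobSq (fderiv ℝ w x) * ‖x - y‖⁻¹) +
      2 * (Fintype.card ι : ℝ) ^ 2 * r⁻¹ * h1Density (u - w) x := by
  have herror : 2 * frobSq (fderiv ℝ u x - fderiv ℝ w x) * ‖x - y‖⁻¹ ≤
      2 * (Fintype.card ι : ℝ) ^ 2 * r⁻¹ * h1Density (u - w) x := by
    have hh1 := h1Density_nonneg (u - w) x
    by_cases hxy : x ∈ ball y r
    · rw [(hwu.eventuallyEq_of_mem (isOpen_ball.mem_nhds hxy)).fderiv_eq, sub_self,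
        frobSq_zero, mul_zero, zero_mul]
      positivity
    · have hr_le : r ≤ ‖x - y‖ := by simpa [dist_eq_norm] using hxy
      calc 2 * frobSq (fderiv ℝ u x - fderiv ℝ w x) * ‖x - y‖⁻¹
          ≤ 2 * ((Fintype.card ι : ℝ) ^ 2 * h1Density (u - w) x) * r⁻¹ := by
            rw [← fderiv_sub hu hw]
            gcongr
            exact (frobSq_le_card_sq_mul_norm_sq _).trans
              (by gcongr; exact norm_fderiv_sq_le_h1Density _ x)
        _ = 2 * (Fintype.card ι : ℝ) ^ 2 * r⁻¹ * h1Density (u - w) x := by ring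
  have := mul_le_mul_of_nonneg_right (frobSq_le_two_mul_add (fderiv ℝ u x) (fderiv ℝ w x))
    (inv_nonneg.2 (norm_nonneg (x - y)))
  linarith

variable {Ω B U : Set (EuclideanSpace ℝ ι)} {u v : EuclideanSpace ℝ ι → ι → ℝ}
  {w : ℕ → EuclideanSpace ℝ ι → ι → ℝ}

theorem IsH1Approx.setIntegral_frobSq_mul_inv_le (hι : 2 ≤ Fintype.card ι)
    (h : IsH1Approx volume Ω u w) (hΩ : IsOpen Ω) (hB : IsOpen B) (n : ℕ) (hr : 0 < r)
    (hwu : Set.EqOn (w n) u (ball y r)) (hv : IsTestFun U v) (hvw : Set.EqOn v (w n) B) :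
    ∫ x in Ω ∩ B, frobSq (fderiv ℝ u x) * ‖x - y‖⁻¹ ≤
      2 * (∫ x, frobSq (fderiv ℝ v x) * ‖x - y‖⁻¹) +
        2 * (Fintype.card ι : ℝ) ^ 2 * r⁻¹ * ∫ x in Ω, h1Density (u - w n) x := by
  let k (f : EuclideanSpace ℝ ι → ι → ℝ) (x : EuclideanSpace ℝ ι) : ℝ :=
    frobSq (fderiv ℝ f x) * ‖x - y‖⁻¹
  have hk₀ (f : EuclideanSpace ℝ ι → ι → ℝ) (x : EuclideanSpace ℝ ι) : 0 ≤ k f x :=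
    mul_nonneg (frobSq_nonneg _) (inv_nonneg.2 (norm_nonneg _))
  have hkv : Integrable (k v) :=
    hv.fderiv.integrable_comp_mul continuous_frobSq frobSq_zero
      (locallyIntegrable_norm_sub_inv (by simpa using hι) y)
  have hsub := h.integrableOn_sub hΩ n
  have hsub_inter : IntegrableOn (h1Density (u - w n)) (Ω ∩ B) :=
    hsub.mono_set Set.inter_subset_left
  calc ∫ x in Ω ∩ B, k u x
      ≤ ∫ x in Ω ∩ B,
          (2 * k v x + 2 * (Fintype.card ι : ℝ) ^ 2 * r⁻¹ * h1Density (u - w n) x) := by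
        refine integral_mono_of_nonneg (ae_of_all _ (hk₀ u))
          ((hkv.integrableOn.const_mul 2).add (hsub_inter.const_mul _)) ?_
        refine (ae_restrict_iff' (hΩ.inter hB).measurableSet).2 (ae_of_all _ fun x hx => ?_)
        have hDv := (hvw.eventuallyEq_of_mem (hB.mem_nhds hx.2)).fderiv_eq (𝕜 := ℝ)
        simp only [k, hDv]
        exact frobSq_fderiv_mul_inv_le (h.differentiableAt hΩ hx.1)
          ((h.isTestFun n).differentiable x) hr hwu
    _ = 2 * (∫ x in Ω ∩ B, k v x) +
          2 * (Fintype.card ι : ℝ) ^ 2 * r⁻¹ * ∫ x in Ω ∩ B, h1Density (u - w n) x := by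
        rw [integral_add (hkv.integrableOn.const_mul 2) (hsub_inter.const_mul _),
          integral_const_mul, integral_const_mul]
    _ ≤ 2 * (∫ x, k v x) +
          2 * (Fintype.card ι : ℝ) ^ 2 * r⁻¹ * ∫ x in Ω, h1Density (u - w n) x := by
        refine add_le_add (mul_le_mul_of_nonneg_left ?_ zero_le_two)
          (mul_le_mul_of_nonneg_left ?_ (by positivity))
        · exact setIntegral_le_integral hkv (ae_of_all _ (hk₀ v))
        · exact setIntegral_mono_set hsub (ae_of_all _ (h1Density_nonneg _))
            (ae_of_all _ Set.inter_subset_left)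

end WeightedEnergy

section LameKernel

variable {α : ℝ} {u v : E3 → Fin 3 → ℝ} {x y : E3}

/-- The fundamental matrix `Φ(z)` as a linear map. -/
def lameKernel (α : ℝ) (z : E3) : (Fin 3 → ℝ) →L[ℝ] (Fin 3 → ℝ) :=
  ∑ i, ∑ j, Phi α z i j • (ContinuousLinearMap.proj j).smulRight (Pi.single i (1 : ℝ))

theorem lameKernel_apply (z : E3) (a : Fin 3 → ℝ) (i : Fin 3) :
    lameKernel α z a i = ∑ j, Phi α z i j * a j := by
  simp [lameKernel, Finset.sum_apply, Pi.single_apply]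

theorem contDiffAt_lameKernel {z : E3} (hz : z ≠ 0) : ContDiffAt ℝ ∞ (lameKernel α) z := by
  have hnorm : ContDiffAt ℝ ∞ (fun z : E3 => ‖z‖) z := contDiffAt_norm ℝ hz
  have hcoord (i : Fin 3) : ContDiffAt ℝ ∞ (fun z : E3 => z i) z := by fun_prop
  unfold lameKernel Phi
  refine ContDiffAt.sum fun i _ => ContDiffAt.sum fun j _ =>
    ContDiffAt.fun_smul ?_ contDiffAt_const
  refine (contDiffAt_const.mul (hnorm.inv (norm_ne_zero_iff.2 hz))).mul
    (contDiffAt_const.add (ContDiffAt.div ?_ (hnorm.pow 2) (by simpa using hz)))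
  exact contDiffAt_const.mul ((hcoord i).mul (hcoord j))

theorem pd_congr {f g : E3 → ℝ} (hfg : f =ᶠ[𝓝 x] g) (k : Fin 3) : pd k f =ᶠ[𝓝 x] pd k g :=
  (hfg.fderiv (𝕜 := ℝ)).mono fun z hz => by simp only [pd, hz]

theorem lame_congr (huv : u =ᶠ[𝓝 x] v) (i : Fin 3) : lame α u x i = lame α v x i := by
  have hpd (j k : Fin 3) := pd_congr (huv.fun_comp (· j)) k
  have hlap : lap (fun z => u z i) x = lap (fun z => v z i) x :=
    Finset.sum_congr rfl fun k _ => (pd_congr (hpd i k) k).self_of_nhds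
  have hdiv : divg u =ᶠ[𝓝 x] divg v := by
    filter_upwards [eventually_all.2 fun k => hpd k k] with z hz
    exact Finset.sum_congr rfl fun k _ => hz k
  rw [lame, lame, hlap, (pd_congr hdiv i).self_of_nhds]

theorem lameEnergy_eq_energyForm {U : Set E3} {r : ℝ} {K : E3 → (Fin 3 → ℝ) →L[ℝ] (Fin 3 → ℝ)}
    (hv : IsTestFun U v) (hlame : ∀ x ∈ ball y r, ∀ i, lame α v x i = 0) (hK : ContDiff ℝ ∞ K)
    (hKΦ : ∀ x ∉ ball y r, K x = lameKernel α (x - y)) :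
    lameEnergy α v y = energyForm volume (lameForm α) v fun x => K x (v x) := by
  rw [energyForm_lameForm_eq (fun x _ => hv.1.contDiffAt)
    (hv.clm_apply fun x _ => hK.contDiffAt)]
  refine integral_congr_ae (ae_of_all _ fun x => Finset.sum_congr rfl fun i _ => ?_)
  by_cases hx : x ∈ ball y r
  · simp [hlame x hx]
  · simp only [hKΦ x hx, lameKernel_apply, Finset.mul_sum, mul_assoc]

end LameKernel

section LocalEstimate

variable {α c₀ : ℝ}

theorem QPDhyp.le_lameEnergy (h : QPDhyp α c₀) {v : E3 → Fin 3 → ℝ} (hv : IsTestFun Set.univ v)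
    (y : E3) :
    1 / 2 * ∑ i, v y i ^ 2 + c₀ * ∫ x, frobSq (fderiv ℝ v x) * ‖x - y‖⁻¹ ≤ lameEnergy α v y := by
  simpa only [sum_pd_sq_eq_frobSq (hv.differentiable _)] using h v hv y

/-- The fundamental matrix is regularized inside `ball y r`, where `L (η u) = 0`, and keeps uniform
bounds where `η` varies, since there `|x - y| ≥ 1/2`. -/
theorem exists_lameEnergy_smul_le (hα : -1 < α) :
    ∃ η : E3 → ℝ, ContDiff ℝ ∞ η ∧ (∀ x ∈ ball 0 (3 / 2), η x = 1) ∧ ∃ C, 0 ≤ C ∧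
      ∀ (Ω : Set E3) (u : E3 → Fin 3 → ℝ) (w : ℕ → E3 → Fin 3 → ℝ) (y : E3) (r : ℝ), IsOpen Ω →
        IsH1Approx volume Ω u w → (∀ x ∈ Ω ∩ ball 0 2, ∀ i, lame α u x i = 0) → y ∈ ball 0 1 →
        0 < r → r < 1 / 2 → ball y r ⊆ Ω → (∀ n, Set.EqOn (w n) u (ball y r)) →
        ∃ e : ℕ → ℝ, Tendsto e atTop (𝓝 0) ∧ ∀ n, lameEnergy α (fun x => η x • w n x) y ≤
          C * (∫ x in Ω ∩ {x | 1 < ‖x‖ ∧ ‖x‖ < 2}, ‖u x‖ ^ 2) + e n := by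
  obtain ⟨η, ζ, hη, hη₁, hη_shell⟩ := exists_isCutoffPair (E := E3) (s := 1) (s' := 3 / 2) (t := 2)
    (by norm_num) (by norm_num)
  obtain ⟨m, hm⟩ := exists_contDiff_eq_norm_le (k := lameKernel α)
    (fun z hz => contDiffAt_lameKernel hz) (one_half_pos (α := ℝ)) 3
  have hannulus : IsOpen {x : E3 | 1 < ‖x‖ ∧ ‖x‖ < 2} :=
    (isOpen_lt continuous_const continuous_norm).inter
      (isOpen_lt continuous_norm continuous_const)
  have hκ₀ : 0 < 1 - α⁻ := sub_pos.2 (max_lt (by linarith) one_pos)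
  obtain ⟨C, hC₀, hC⟩ := hη.exists_energyForm_le (b := lameForm α) (μ := volume)
    hannulus.measurableSet (fun x hx => by simpa using hx.2) (lameForm_comm · · α) hκ₀
    (mul_norm_sq_le_lameForm · α hα) m
  refine ⟨η, hη.isTestFun_left.1, hη₁, C, hC₀, fun Ω u w y r hΩ h hu hy hr hr₂ hyΩ hwu => ?_⟩
  rw [mem_ball_zero_iff] at hy
  obtain ⟨K, hK, hKΦ, hKm⟩ := hm y r hr hr₂
  have hball : ball y r ⊆ ball 0 (3 / 2) := ball_subset_ball' (by rw [dist_zero_right]; linarith)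
  have hweak : IsWeakSolution volume (lameForm α) (Ω ∩ ball 0 2) u :=
    isWeakSolution_lameForm (fun x hx => h.contDiffAt hΩ hx.1) hu
  have hK_le : ∀ x, fderiv ℝ η x ≠ 0 → ‖K x‖ ≤ m ∧ ‖fderiv ℝ K x‖ ≤ m := fun x hx => by
    have := hη_shell x hx
    exact hKm x (by linarith [norm_sub_norm_le x y]) (by linarith [norm_sub_le x y])
  obtain ⟨e, he, hle⟩ := hC Ω u w K hΩ h hweak hK hK_le
  refine ⟨e, he, fun n => ?_⟩
  rw [lameEnergy_eq_energyForm ((h.isTestFun n).smul_right hη.isTestFun_left.1) ?_ hK hKΦ]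
  · exact hle n
  · intro x hx i
    have hηw : (fun z => η z • w n z) =ᶠ[𝓝 x] u := by
      filter_upwards [isOpen_ball.mem_nhds hx] with z hz
      rw [hη₁ z (hball hz), one_smul, hwu n hz]
    rw [lame_congr hηw]
    exact hu x ⟨hyΩ hx, ball_subset_ball (by norm_num) (hball hx)⟩ i

theorem QPDhyp.exists_unit_scale_estimate (h : QPDhyp α c₀) (hα : -1 < α) (hc₀ : 0 ≤ c₀) :
    ∃ C, 0 ≤ C ∧ ∀ (Ω : Set E3) (u : E3 → Fin 3 → ℝ) (w : ℕ → E3 → Fin 3 → ℝ), IsOpen Ω →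
      IsH1Approx volume Ω u w → (∀ x ∈ Ω ∩ ball 0 2, ∀ i, lame α u x i = 0) →
      ∀ y ∈ Ω ∩ ball 0 1,
        ∑ i, u y i ^ 2 + c₀ * ∫ x in Ω ∩ ball 0 1, frobSq (fderiv ℝ u x) * ‖x - y‖⁻¹ ≤
          C * ∫ x in Ω ∩ {x | 1 < ‖x‖ ∧ ‖x‖ < 2}, ‖u x‖ ^ 2 := by
  obtain ⟨η, hη, hη₁, C, hC₀, hC⟩ := exists_lameEnergy_smul_le hα
  refine ⟨2 * C, by positivity, fun Ω u w₀ hΩ hw₀ hu y hy => ?_⟩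
  obtain ⟨R, hR, hRΩ⟩ := nhds_basis_closedBall.mem_iff.1 (hΩ.mem_nhds hy.1)
  obtain ⟨w, hw, hwu⟩ := hw₀.exists_eqOn hΩ (isCompact_closedBall y R) hRΩ
  obtain ⟨r, hr, hr_lt⟩ := exists_between (lt_min hR one_half_pos)
  have hball : ball y r ⊆ closedBall y R :=
    ball_subset_closedBall.trans (closedBall_subset_closedBall (hr_lt.le.trans (min_le_left _ _)))
  have hwu_ball (n : ℕ) : Set.EqOn (w n) u (ball y r) := (hwu n).mono hball
  obtain ⟨e, he, hle⟩ := hC Ω u w y r hΩ hw hu hy.2 hr (hr_lt.trans_le (min_le_right _ _))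
    (hball.trans hRΩ) hwu_ball
  have hηw (n : ℕ) : IsTestFun Set.univ fun x => η x • w n x :=
    ((hw.isTestFun n).smul_right hη).mono (Set.subset_univ _)
  have hbound (n : ℕ) := hw.setIntegral_frobSq_mul_inv_le (by simp) hΩ
    (isOpen_ball (x := 0) (ε := 1)) n hr (hwu_ball n) (hηw n) fun x hx => by
      rw [hη₁ x (ball_subset_ball (by norm_num) hx), one_smul]
  have hηw_y (n : ℕ) : η y • w n y = u y := by
    rw [hη₁ y (ball_subset_ball (by norm_num) hy.2), one_smul, hwu_ball n (mem_ball_self hr)]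
  set I := ∫ x in Ω ∩ {x | 1 < ‖x‖ ∧ ‖x‖ < 2}, ‖u x‖ ^ 2
  set D : ℝ := 2 * (Fintype.card (Fin 3) : ℝ) ^ 2 * r⁻¹
  refine ge_of_tendsto' (f := fun n => 2 * C * I +
    (2 * e n + c₀ * (D * ∫ x in Ω, h1Density (u - w n) x))) (x := atTop) ?_ fun n => ?_
  · simpa using ((he.const_mul 2).add ((hw.tendsto.const_mul D).const_mul c₀)).const_add (2 * C * I)
  · have hqpd := (h.le_lameEnergy (hηw n) y).trans (hle n)
    rw [hηw_y] at hqpd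
    linarith [mul_le_mul_of_nonneg_left (hbound n) hc₀]

end LocalEstimate

section Scaling

section ChangeOfVariables

variable {E F : Type*} [NormedAddCommGroup E] [NormedSpace ℝ E] [NormedAddCommGroup F]
  [NormedSpace ℝ F] [FiniteDimensional ℝ E] [MeasurableSpace E] [BorelSpace E] {μ : Measure E}
  [μ.IsAddHaarMeasure] {c : ℝ}

theorem setIntegral_comp_smul_preimage (hc : 0 < c) (s : Set E) (f : E → F) :
    ∫ x in (c • ·) ⁻¹' s, f (c • x) ∂μ =
      (c ^ Module.finrank ℝ E)⁻¹ • ∫ x in s, f x ∂μ := by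
  rw [Measure.setIntegral_comp_smul_of_pos μ f _ hc, ← Set.image_smul,
    Set.image_preimage_eq _ fun x => ⟨c⁻¹ • x, smul_inv_smul₀ hc.ne' x⟩]

omit [NormedSpace ℝ F] in
theorem integrableOn_comp_smul_preimage {s : Set E} {f : E → F} (hc : c ≠ 0)
    (hs : MeasurableSet s) (hf : IntegrableOn f s μ) :
    IntegrableOn (fun x => f (c • x)) ((c • ·) ⁻¹' s) μ := by
  rw [← integrable_indicator_iff (measurable_const_smul c hs)]
  exact (integrable_comp_smul_iff μ (s.indicator f) hc).2 ((integrable_indicator_iff hs).2 hf)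

theorem IsH1Approx.comp_smul {Ω : Set E} {u : E → F} {w : ℕ → E → F} (h : IsH1Approx μ Ω u w)
    (hΩ : IsOpen Ω) (hc : 0 < c) :
    IsH1Approx μ ((c • ·) ⁻¹' Ω) (fun x => u (c • x)) fun n x => w n (c • x) := by
  have hΩ' : IsOpen ((c • · : E → E) ⁻¹' Ω) := hΩ.preimage (continuous_const_smul c)
  have hu' : ContDiffOn ℝ ∞ (fun x => u (c • x)) ((c • ·) ⁻¹' Ω) :=
    h.contDiffOn.comp (contDiff_const_smul c).contDiffOn (Set.mapsTo_preimage _ _)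
  refine ⟨hu', ?_, fun n => (h.isTestFun n).comp_smul hc.ne', ?_⟩
  · refine ((integrableOn_comp_smul_preimage hc.ne' hΩ.measurableSet h.integrableOn).const_mul
      (1 + c ^ 2)).mono' ((continuousOn_h1Density hu' hΩ').aestronglyMeasurable
        hΩ'.measurableSet) (ae_of_all _ fun x => ?_)
    rw [Real.norm_of_nonneg (h1Density_nonneg _ x)]
    exact h1Density_comp_smul_le c u x
  · refine squeeze_zero (fun n => integral_nonneg (h1Density_nonneg _)) (fun n => ?_)
      (by simpa using h.tendsto.const_mul ((1 + c ^ 2) * (c ^ Module.finrank ℝ E)⁻¹))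
    rw [mul_assoc, ← smul_eq_mul (c ^ _)⁻¹, ← setIntegral_comp_smul_preimage hc,
      ← integral_const_mul]
    exact integral_mono_of_nonneg (ae_of_all _ (h1Density_nonneg _))
      ((integrableOn_comp_smul_preimage hc.ne' hΩ.measurableSet
        (h.integrableOn_sub hΩ n)).const_mul _)
      (ae_of_all _ (h1Density_comp_smul_le c (u - w n)))

end ChangeOfVariables

variable {c : ℝ} {x : E3}

theorem pd_comp_smul (k : Fin 3) (f : E3 → ℝ) :
    pd k (fun z => f (c • z)) = fun x => c * pd k f (c • x) := by
  ext x
  simp only [pd, fderiv_comp_smul, smul_apply, smul_eq_mul]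

theorem pd_const_mul (k : Fin 3) (f : E3 → ℝ) :
    pd k (fun z => c * f z) x = c * pd k f x := by
  simp only [pd, ← smul_eq_mul, ← Pi.smul_def, fderiv_const_smul_field, Pi.smul_apply, smul_apply]

theorem lame_comp_smul (α : ℝ) (u : E3 → Fin 3 → ℝ) (i : Fin 3) :
    lame α (fun z => u (c • z)) x i = c ^ 2 * lame α u (c • x) i := by
  have hpd (j k : Fin 3) :
      pd k (fun z => u (c • z) j) = fun z => c * pd k (fun y => u y j) (c • z) :=
    pd_comp_smul k fun y => u y j
  have hdiv : divg (fun z => u (c • z)) = fun z => c * divg u (c • z) := by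
    ext z
    simp only [divg, hpd, Finset.mul_sum]
  have hlap : lap (fun z => u (c • z) i) x = c ^ 2 * lap (fun z => u z i) (c • x) := by
    simp only [lap, hpd, pd_const_mul, pd_comp_smul, Finset.mul_sum, ← mul_assoc, sq]
  rw [lame, lame, hlap, hdiv, pd_const_mul, pd_comp_smul]
  ring

theorem setIntegral_frobSq_comp_smul (hc : 0 < c) (u : E3 → Fin 3 → ℝ) (y : E3)
    (s : Set E3) :
    ∫ x in (c • ·) ⁻¹' s, frobSq (fderiv ℝ (fun z => u (c • z)) x) * ‖x - c⁻¹ • y‖⁻¹ =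
      ∫ x in s, frobSq (fderiv ℝ u x) * ‖x - y‖⁻¹ := by
  have hscale (x : E3) : frobSq (fderiv ℝ (fun z => u (c • z)) x) * ‖x - c⁻¹ • y‖⁻¹ =
      c ^ 3 * (frobSq (fderiv ℝ u (c • x)) * ‖c • x - y‖⁻¹) := by
    have hnorm : ‖c • x - y‖ = c * ‖x - c⁻¹ • y‖ := by
      rw [← norm_smul_of_nonneg hc.le, smul_sub, smul_inv_smul₀ hc.ne']
    rw [hnorm, fderiv_comp_smul, frobSq_smul]
    field_simp
  simp only [hscale]
  rw [integral_const_mul, setIntegral_comp_smul_preimage hc _ fun x =>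
    frobSq (fderiv ℝ u x) * ‖x - y‖⁻¹, finrank_euclideanSpace_fin, smul_eq_mul,
    mul_inv_cancel_left₀ (by positivity)]

theorem QPDhyp.exists_local_estimate {α c₀ : ℝ} (h : QPDhyp α c₀) (hα : -1 < α) (hc₀ : 0 ≤ c₀) :
    ∃ C, 0 ≤ C ∧ ∀ (Ω : Set E3) (ρ : ℝ) (u : E3 → Fin 3 → ℝ) (w : ℕ → E3 → Fin 3 → ℝ),
      IsOpen Ω → 0 < ρ → IsH1Approx volume Ω u w →
      (∀ x ∈ Ω ∩ ball 0 (2 * ρ), ∀ i, lame α u x i = 0) → ∀ y ∈ Ω ∩ ball 0 ρ,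
        ∑ i, u y i ^ 2 + c₀ * ∫ x in Ω ∩ ball 0 ρ, frobSq (fderiv ℝ u x) * ‖x - y‖⁻¹ ≤
          C * ((ρ ^ 3)⁻¹ * ∫ x in Ω ∩ {x | ρ < ‖x‖ ∧ ‖x‖ < 2 * ρ}, ‖u x‖ ^ 2) := by
  obtain ⟨C, hC₀, hC⟩ := h.exists_unit_scale_estimate hα hc₀
  refine ⟨C, hC₀, fun Ω ρ u w hΩ hρ hw hu y hy => ?_⟩
  have hnorm (x : E3) : ‖ρ • x‖ = ρ * ‖x‖ := norm_smul_of_nonneg hρ.le x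
  have hball (t : ℝ) : (ρ • · : E3 → E3) ⁻¹' ball 0 (t * ρ) = ball 0 t := by
    ext x
    simp [hnorm, mul_comm ρ, hρ]
  have hannulus : (ρ • · : E3 → E3) ⁻¹' {x | ρ < ‖x‖ ∧ ‖x‖ < 2 * ρ} =
      {x | 1 < ‖x‖ ∧ ‖x‖ < 2} := by
    ext x
    simp [hnorm, mul_comm ρ, hρ]
  have hunit := hC _ _ _ (hΩ.preimage (continuous_const_smul ρ)) (hw.comp_smul hΩ hρ)
    (fun x hx i => ?_) (ρ⁻¹ • y) ?_
  · rwa [smul_inv_smul₀ hρ.ne', ← hball 1, one_mul, ← hannulus, ← Set.preimage_inter,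
      ← Set.preimage_inter, setIntegral_frobSq_comp_smul hρ,
      setIntegral_comp_smul_preimage hρ _ fun x => ‖u x‖ ^ 2, finrank_euclideanSpace_fin,
      smul_eq_mul] at hunit
  · rw [lame_comp_smul, hu _ ⟨hx.1, (hball 2).ge hx.2⟩, mul_zero]
  · rw [← hball 1, ← Set.preimage_inter, Set.mem_preimage, smul_inv_smul₀ hρ.ne', one_mul]
    exact hy

end Scaling

section CoordinateNorms

variable {ι : Type*} [Fintype ι] [DecidableEq ι]

theorem h1Density_le_sum_sq_add_frobSq (f : EuclideanSpace ℝ ι → ι → ℝ)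
    (x : EuclideanSpace ℝ ι) :
    h1Density f x ≤ ∑ i, f x i ^ 2 + frobSq (fderiv ℝ f x) :=
  add_le_add (norm_sq_le_sum_sq _) (norm_sq_le_frobSq _)

theorem sum_sq_add_frobSq_le_mul_h1Density (f : EuclideanSpace ℝ ι → ι → ℝ)
    (x : EuclideanSpace ℝ ι) :
    ∑ i, f x i ^ 2 + frobSq (fderiv ℝ f x) ≤ (Fintype.card ι : ℝ) ^ 2 * h1Density f x := by
  have hcard : (Fintype.card ι : ℝ) ≤ (Fintype.card ι : ℝ) ^ 2 := by
    exact_mod_cast Nat.le_self_pow two_ne_zero _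
  rw [h1Density, mul_add]
  exact add_le_add ((sum_sq_le_card_mul_norm_sq _).trans (by gcongr))
    (frobSq_le_card_sq_mul_norm_sq _)

theorem integrableOn_sum_sq_add_frobSq {Ω : Set (EuclideanSpace ℝ ι)}
    {f : EuclideanSpace ℝ ι → ι → ℝ} (hΩ : IsOpen Ω) (hf : ContDiffOn ℝ ∞ f Ω)
    (hf_int : IntegrableOn (h1Density f) Ω) :
    IntegrableOn (fun x => ∑ i, f x i ^ 2 + frobSq (fderiv ℝ f x)) Ω := by
  have hcont : ContinuousOn (fun x => ∑ i, f x i ^ 2 + frobSq (fderiv ℝ f x)) Ω := by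
    have hf_cont := hf.continuousOn
    exact ContinuousOn.add (by fun_prop) (continuous_frobSq.comp_continuousOn
      (hf.continuousOn_fderiv_of_isOpen hΩ (by simp)))
  refine (hf_int.const_mul ((Fintype.card ι : ℝ) ^ 2)).mono'
    (hcont.aestronglyMeasurable hΩ.measurableSet) (ae_of_all _ fun x => ?_)
  rw [Real.norm_of_nonneg ((h1Density_nonneg f x).trans (h1Density_le_sum_sq_add_frobSq f x))]
  exact sum_sq_add_frobSq_le_mul_h1Density f x

variable {Ω : Set E3} {u : E3 → Fin 3 → ℝ}

theorem MemH10.exists_isH1Approx (h : MemH10 Ω u) (hΩ : IsOpen Ω) :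
    ∃ w, IsH1Approx volume Ω u w := by
  obtain ⟨hu, hint, w, hw, hlim⟩ := h
  replace hw (n : ℕ) : IsTestFun Ω (w n) := hw n
  have hdiff {x : E3} (hx : x ∈ Ω) : DifferentiableAt ℝ u x :=
    (hu.contDiffAt (hΩ.mem_nhds hx)).differentiableAt (by simp)
  have hu_int : IntegrableOn (h1Density u) Ω := by
    refine hint.mono' ((continuousOn_h1Density hu hΩ).aestronglyMeasurable hΩ.measurableSet) ?_
    refine (ae_restrict_iff' hΩ.measurableSet).2 (ae_of_all _ fun x hx => ?_)
    rw [Real.norm_of_nonneg (h1Density_nonneg _ x), sum_pd_sq_eq_frobSq (hdiff hx)]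
    exact h1Density_le_sum_sq_add_frobSq u x
  refine ⟨w, hu, hu_int, hw, squeeze_zero (fun n => integral_nonneg (h1Density_nonneg _))
    (fun n => ?_) hlim⟩
  calc ∫ x in Ω, h1Density (u - w n) x
      ≤ ∫ x in Ω, (∑ i, (u - w n) x i ^ 2 + frobSq (fderiv ℝ (u - w n) x)) :=
        integral_mono_of_nonneg (ae_of_all _ (h1Density_nonneg _))
          (integrableOn_sum_sq_add_frobSq hΩ (hu.sub (hw n).1.contDiffOn)
            ((hw n).integrableOn_h1Density_sub hΩ hu hu_int))
          (ae_of_all _ (h1Density_le_sum_sq_add_frobSq _))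
    _ = _ := by
        refine setIntegral_congr_fun hΩ.measurableSet fun x hx => ?_
        simp only [← sum_pd_sq_eq_frobSq ((hdiff hx).sub ((hw n).differentiable x)),
          Pi.sub_apply]

theorem MemH10.inv_mul_setIntegral_norm_sq_le_mRho (h : MemH10 Ω u) (hΩ : IsOpen Ω) {ρ : ℝ}
    (hρ : 0 ≤ ρ) :
    (ρ ^ 3)⁻¹ * ∫ x in Ω ∩ {x | ρ < ‖x‖ ∧ ‖x‖ < 2 * ρ}, ‖u x‖ ^ 2 ≤ mRho Ω ρ u := by
  have hint : IntegrableOn (fun x => ∑ i, u x i ^ 2) Ω := by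
    have hu := h.1.continuousOn
    refine h.2.1.mono' (ContinuousOn.aestronglyMeasurable (by fun_prop) hΩ.measurableSet)
      (ae_of_all _ fun x => ?_)
    rw [Real.norm_of_nonneg (by positivity)]
    exact le_add_of_nonneg_right (by positivity)
  rw [mRho]
  gcongr ?_ * ?_
  exact integral_mono_of_nonneg (ae_of_all _ fun x => sq_nonneg _)
    (hint.mono_set Set.inter_subset_left) (ae_of_all _ fun x => norm_sq_le_sum_sq (u x))

end CoordinateNorms

/-- Under (QPD): if `Lu = 0` on `Ω ∩ B_{2ρ}` then for all `y ∈ Ω ∩ B_ρ`,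
`|u(y)|² + ∫_{Ω∩B_ρ} |Du(x)|²/|x-y| dx ≤ c m_ρ(u)`, with `c` depending only on `α, c₀`. -/
theorem lame_local_pointwise_estimate
    (α : ℝ) (hα : -1 < α) (c₀ : ℝ) (hc₀ : 0 < c₀) (hQPD : QPDhyp α c₀) :
    ∃ c > (0 : ℝ), ∀ Ω : Set E3, IsOpen Ω → ∀ ρ : ℝ, 0 < ρ →
      ∀ u : E3 → Fin 3 → ℝ, MemH10 Ω u →
      (∀ x ∈ Ω ∩ ball (0 : E3) (2 * ρ), ∀ i, lame α u x i = 0) →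
      ∀ y ∈ Ω ∩ ball (0 : E3) ρ,
        (∑ i, (u y i) ^ 2) +
            (∫ x in Ω ∩ ball (0 : E3) ρ,
              (∑ i, ∑ k, (pd k (fun z => u z i) x) ^ 2) * ‖x - y‖⁻¹) ≤
          c * mRho Ω ρ u := by
  obtain ⟨C, hC₀, hC⟩ := hQPD.exists_local_estimate hα hc₀.le
  have hmin : 0 < min 1 c₀ := lt_min one_pos hc₀
  refine ⟨(C + 1) / min 1 c₀, by positivity, fun Ω hΩ ρ hρ u hu hlame y hy => ?_⟩
  obtain ⟨w, hw⟩ := hu.exists_isH1Approx hΩ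
  have hmRho := hu.inv_mul_setIntegral_norm_sq_le_mRho hΩ hρ.le
  have hmRho_nonneg : 0 ≤ mRho Ω ρ u := le_trans (by positivity) hmRho
  have hgrad : ∫ x in Ω ∩ ball 0 ρ, (∑ i, ∑ k, pd k (fun z => u z i) x ^ 2) * ‖x - y‖⁻¹ =
      ∫ x in Ω ∩ ball 0 ρ, frobSq (fderiv ℝ u x) * ‖x - y‖⁻¹ :=
    setIntegral_congr_fun (hΩ.inter isOpen_ball).measurableSet fun x hx => by
      simp only [sum_pd_sq_eq_frobSq (hw.differentiableAt hΩ hx.1)]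
  have hgrad_nonneg : 0 ≤ ∫ x in Ω ∩ ball 0 ρ, frobSq (fderiv ℝ u x) * ‖x - y‖⁻¹ :=
    integral_nonneg fun x => mul_nonneg (frobSq_nonneg _) (by positivity)
  rw [hgrad, div_mul_eq_mul_div, le_div_iff₀' hmin]
  calc min 1 c₀ * (∑ i, u y i ^ 2 + ∫ x in Ω ∩ ball 0 ρ, frobSq (fderiv ℝ u x) * ‖x - y‖⁻¹)
      ≤ 1 * ∑ i, u y i ^ 2 + c₀ * ∫ x in Ω ∩ ball 0 ρ, frobSq (fderiv ℝ u x) * ‖x - y‖⁻¹ := by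
        rw [mul_add]
        gcongr
        exacts [min_le_left _ _, min_le_right _ _]
    _ ≤ C * mRho Ω ρ u := by
        rw [one_mul]
        exact (hC Ω ρ u w hΩ hρ hw hlame y hy).trans (by gcongr)
    _ ≤ (C + 1) * mRho Ω ρ u := by gcongr; exact le_add_of_nonneg_right zero_le_one
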